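/- arXiv:2502.18257 — 3 statements merged into one kernel-verified Lean document; each statement's English description precedes it below -/
import Mathlib

section
/- Let R be a Dedekind domain and let I, J be nonzero ideals of R. Then there is an isomorphism of R-modules J ⊕ (I ⊗_R I) ≅ (J ⊗_R I) ⊕ I. -/
/-!
By Steinitz, a direct sum `A ⊕ B` of nonzero ideals of a Dedekind domain is determined up to
isomorphism by the ideal class of `A * B`. Indeed `A` may be replaced by an ideal of its class that
is coprime to `B`; then addition `A ⊕ B → R` is a split surjection with kernel `A ⊓ B = A * B`, so
`A ⊕ B ≅ A * B ⊕ R`. Since ideals are flat, `I ⊗ I ≅ I * I` and `J ⊗ I ≅ J * I`, and the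
isomorphism sought is the case of the two equal products `J * (I * I) = (J * I) * I`.
-/

open scoped nonZeroDivisors

theorem nonempty_prod_linearEquiv_inf_prod_sup {R M : Type*} [Ring R] [AddCommGroup M] [Module R M]
    (P Q : Submodule R M) [Module.Projective R ↥(P ⊔ Q)] :
    Nonempty ((P × Q) ≃ₗ[R] (↥(P ⊓ Q) × ↥(P ⊔ Q))) := by
  let antidiagonal : ↥(P ⊓ Q) →ₗ[R] P × Q :=
    (Submodule.inclusion inf_le_left).prod (-Submodule.inclusion inf_le_right)
  let sum : P × Q →ₗ[R] ↥(P ⊔ Q) :=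
    (Submodule.inclusion le_sup_left).coprod (Submodule.inclusion le_sup_right)
  have antidiagonal_injective : Function.Injective antidiagonal := fun x y h ↦
    Subtype.ext (congrArg (fun z ↦ (z.1 : M)) h)
  have sum_surjective : Function.Surjective sum := by
    rintro ⟨x, hx⟩
    obtain ⟨p, hp, q, hq, rfl⟩ := Submodule.mem_sup.1 hx
    exact ⟨(⟨p, hp⟩, ⟨q, hq⟩), rfl⟩
  have exact_antidiagonal_sum : Function.Exact antidiagonal sum := by
    rintro ⟨⟨p, hp⟩, ⟨q, hq⟩⟩
    constructor
    · intro h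
      have hpq : p + q = 0 := congrArg Subtype.val h
      obtain rfl : q = -p := (neg_eq_of_add_eq_zero_right hpq).symm
      exact ⟨⟨p, hp, neg_mem_iff.1 hq⟩, rfl⟩
    · rintro ⟨x, hx⟩
      rw [← hx]
      exact Subtype.ext (add_neg_cancel (x : M))
  obtain ⟨splitting, sum_comp_splitting⟩ :=
    sum.exists_rightInverse_of_surjective (LinearMap.range_eq_top.2 sum_surjective)
  exact ⟨(exact_antidiagonal_sum.splitSurjectiveEquiv antidiagonal_injective
    ⟨splitting, sum_comp_splitting⟩).1⟩

theorem nonempty_prod_linearEquiv_mul_prod_of_isCoprime {R : Type*} [CommRing R] {A B : Ideal R}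
    (h : IsCoprime A B) : Nonempty ((A × B) ≃ₗ[R] (↥(A * B) × R)) := by
  have sup_eq_top : A ⊔ B = ⊤ := Ideal.isCoprime_iff_sup_eq.1 h
  let supEquiv : ↥(A ⊔ B) ≃ₗ[R] R := .ofTop _ sup_eq_top
  have : Module.Projective R ↥(A ⊔ B) := .of_equiv supEquiv.symm
  obtain ⟨e⟩ := nonempty_prod_linearEquiv_inf_prod_sup A B
  exact ⟨e ≪≫ₗ (LinearEquiv.ofEq _ _ (Ideal.mul_eq_inf_of_isCoprime h).symm).prodCongr supEquiv⟩

theorem linearDisjoint_of_flat {R : Type*} [CommRing R] (A B : Ideal R) [Module.Flat R B] :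
    Submodule.LinearDisjoint A B :=
  .of_left_le_one_of_flat A B fun r _ ↦ Submodule.mem_one.2 ⟨r, rfl⟩

theorem nonempty_linearEquiv_span_singleton_mul {R : Type*} [CommSemiring R] {c : R}
    (hc : IsLeftRegular c) (A : Ideal R) : Nonempty (A ≃ₗ[R] ↥(Ideal.span {c} * A)) := by
  have map_eq : Submodule.map (LinearMap.mulLeft R c) A = Ideal.span {c} * A := by
    ext x
    simp only [Submodule.mem_map, LinearMap.mulLeft_apply, Ideal.mem_span_singleton_mul]
  exact ⟨Submodule.equivMapOfInjective (LinearMap.mulLeft R c) hc A ≪≫ₗ .ofEq _ _ map_eq⟩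

section IsDedekindDomain

variable {R : Type*} [CommRing R] [IsDedekindDomain R]

theorem nonempty_linearEquiv_of_mk0_eq {A B : (Ideal R)⁰}
    (h : ClassGroup.mk0 A = ClassGroup.mk0 B) : Nonempty (A.1 ≃ₗ[R] B.1) := by
  obtain ⟨x, y, hx, hy, hxy⟩ := ClassGroup.mk0_eq_mk0_iff.1 h
  obtain ⟨eA⟩ := nonempty_linearEquiv_span_singleton_mul (IsRegular.of_ne_zero hx).left A.1
  obtain ⟨eB⟩ := nonempty_linearEquiv_span_singleton_mul (IsRegular.of_ne_zero hy).left B.1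
  exact ⟨eA ≪≫ₗ .ofEq _ _ hxy ≪≫ₗ eB.symm⟩

theorem exists_ne_zero_mul_sup_span_singleton_eq {B C : Ideal R} (hB : B ≠ ⊥) (hC : C ≠ ⊥) :
    ∃ c ≠ 0, C * B ⊔ Ideal.span {c} = C := by
  obtain ⟨c, hc⟩ := IsDedekindDomain.exists_sup_span_eq (I := C * B) (J := C)
    Ideal.mul_le_left (mul_ne_zero hC hB)
  obtain rfl | hc0 := eq_or_ne c 0
  · obtain ⟨d, hdC, hd0⟩ := Submodule.exists_mem_ne_zero_of_ne_bot hC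
    have mul_eq : C * B = C := by simpa using hc
    exact ⟨d, hd0, by rwa [mul_eq, sup_eq_left, Ideal.span_singleton_le_iff_mem]⟩
  · exact ⟨c, hc0, hc⟩

theorem exists_mk0_eq_and_isCoprime (x : ClassGroup R) {B : Ideal R} (hB : B ≠ ⊥) :
    ∃ D : (Ideal R)⁰, ClassGroup.mk0 D = x ∧ IsCoprime D.1 B := by
  obtain ⟨C, hC⟩ := ClassGroup.mk0_surjective x⁻¹
  have hC0 : C.1 ≠ 0 := nonZeroDivisors.coe_ne_zero C
  obtain ⟨c, hc0, hc⟩ := exists_ne_zero_mul_sup_span_singleton_eq hB hC0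
  obtain ⟨D, hD⟩ : C.1 ∣ Ideal.span {c} := Ideal.dvd_iff_le.2 (le_sup_right.trans hc.le)
  have hD0 : D ≠ 0 := by
    rintro rfl
    simp [hc0] at hD
  refine ⟨⟨D, mem_nonZeroDivisors_of_ne_zero hD0⟩, ?_, Ideal.isCoprime_iff_sup_eq.2 ?_⟩
  · rw [← inv_inv x, ← hC]
    exact ClassGroup.mk0_eq_mk0_inv_iff.2 ⟨c, hc0, by rw [hD, mul_comm]⟩
  · apply mul_left_cancel₀ hC0
    rw [Ideal.mul_sup, ← hD, sup_comm, hc, Ideal.mul_top]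

theorem nonempty_prod_linearEquiv_mul_prod (A B : (Ideal R)⁰) :
    Nonempty ((A.1 × B.1) ≃ₗ[R] ((A * B).1 × R)) := by
  obtain ⟨D, hDA, hDB⟩ :=
    exists_mk0_eq_and_isCoprime (ClassGroup.mk0 A) (nonZeroDivisors.coe_ne_zero B)
  obtain ⟨replace_left⟩ := nonempty_linearEquiv_of_mk0_eq hDA.symm
  obtain ⟨split⟩ := nonempty_prod_linearEquiv_mul_prod_of_isCoprime hDB
  obtain ⟨replace_mul⟩ : Nonempty ((D * B).1 ≃ₗ[R] (A * B).1) :=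
    nonempty_linearEquiv_of_mk0_eq (by rw [map_mul, map_mul, hDA])
  exact ⟨replace_left.prodCongr (.refl R _) ≪≫ₗ split ≪≫ₗ replace_mul.prodCongr (.refl R R)⟩

theorem nonempty_prod_linearEquiv_prod_of_mk0_mul_eq {A B C D : (Ideal R)⁰}
    (h : ClassGroup.mk0 (A * B) = ClassGroup.mk0 (C * D)) :
    Nonempty ((A.1 × B.1) ≃ₗ[R] (C.1 × D.1)) := by
  obtain ⟨eAB⟩ := nonempty_prod_linearEquiv_mul_prod A B
  obtain ⟨eCD⟩ := nonempty_prod_linearEquiv_mul_prod C D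
  obtain ⟨e⟩ := nonempty_linearEquiv_of_mk0_eq h
  exact ⟨eAB ≪≫ₗ e.prodCongr (.refl R R) ≪≫ₗ eCD.symm⟩

end IsDedekindDomain

/-- Let `R` be a Dedekind domain and `I`, `J` nonzero ideals of `R`. Then there is an
isomorphism of `R`-modules `J ⊕ (I ⊗[R] I) ≅ (J ⊗[R] I) ⊕ I`. -/
theorem stmt_1 (R : Type*) [CommRing R] [IsDedekindDomain R]
    (I J : Ideal R) (hI : I ≠ ⊥) (hJ : J ≠ ⊥) :
    Nonempty ((J × (TensorProduct R I I)) ≃ₗ[R] ((TensorProduct R J I) × I)) := by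
  let I₀ : (Ideal R)⁰ := ⟨I, mem_nonZeroDivisors_of_ne_zero hI⟩
  let J₀ : (Ideal R)⁰ := ⟨J, mem_nonZeroDivisors_of_ne_zero hJ⟩
  let tensorEquivMul (A : Ideal R) : TensorProduct R A I ≃ₗ[R] ↥(A * I) :=
    (linearDisjoint_of_flat A I).mulMap
  obtain ⟨e⟩ : Nonempty ((J × ↥(I * I)) ≃ₗ[R] (↥(J * I) × I)) :=
    nonempty_prod_linearEquiv_prod_of_mk0_mul_eq (A := J₀) (B := I₀ * I₀) (C := J₀ * I₀) (D := I₀)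
      (by rw [mul_assoc])
  exact ⟨(LinearEquiv.refl R J).prodCongr (tensorEquivMul I) ≪≫ₗ e ≪≫ₗ
    (tensorEquivMul J).symm.prodCongr (.refl R I)⟩
end

section
/- Let S be a principal ideal domain and R = S[x₁, …, xₙ] a polynomial ring over S. Then every finitely generated projective R-module is free. -/
/-!
Inverting the monic polynomials of `S[X]` gives the ring `S(X)`, which is again a principal ideal
domain. Argue by induction on the number of variables. A finitely generated projective module over
`S[X][x₁, …, xₙ]` becomes free over `S(X)[x₁, …, xₙ]`, hence already after inverting a single monic
polynomial in `X`. By Horrocks' theorem it is then free locally on `S[x₁, …, xₙ]`, so that by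
Quillen patching it is extended from `S[x₁, …, xₙ]`, over which finitely generated projective
modules are free by induction.

In the local case, free summands of rank one are split off until the rank is one. There a generator
is found from a monic polynomial of least degree, by Suslin's lemma on leading coefficients.

Projective modules are represented by idempotent matrices, for which base change is entrywise and
descent from a localization is a matter of clearing finitely many denominators.
-/

open Polynomial

namespace QuillenSuslin

universe u

section IdempotentMatrices

variable {R R' l m n : Type*} [CommRing R] [CommRing R'] [Fintype l] [Fintype m] [Fintype n]

/-- Equivalence of matrices in the sense of Murray and von Neumann. If `E` and `F` are idempotent,
it says that their images are isomorphic `R`-modules. The sizes of `E` and `F` may differ. -/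
def IdemEquiv (E : Matrix m m R) (F : Matrix n n R) : Prop :=
  ∃ (V : Matrix m n R) (W : Matrix n m R), V * W = E ∧ W * V = F

lemma IdemEquiv.refl {E : Matrix m m R} (hE : IsIdempotentElem E) : IdemEquiv E E :=
  ⟨E, E, hE, hE⟩

lemma IdemEquiv.symm {E : Matrix m m R} {F : Matrix n n R} (h : IdemEquiv E F) :
    IdemEquiv F E :=
  let ⟨V, W, hVW, hWV⟩ := h
  ⟨W, V, hWV, hVW⟩

lemma IdemEquiv.trans {E : Matrix l l R} {F : Matrix m m R} {G : Matrix n n R}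
    (hE : IsIdempotentElem E) (hG : IsIdempotentElem G) (hEF : IdemEquiv E F)
    (hFG : IdemEquiv F G) : IdemEquiv E G := by
  obtain ⟨V, W, rfl, rfl⟩ := hEF
  obtain ⟨V', W', hF, rfl⟩ := hFG
  refine ⟨V * V', W' * W, ?_, ?_⟩
  · calc V * V' * (W' * W) = V * (V' * W') * W := by simp only [Matrix.mul_assoc]
      _ = V * W * (V * W) := by rw [hF]; simp only [Matrix.mul_assoc]
      _ = V * W := hE
  · calc W' * W * (V * V') = W' * (W * V) * V' := by simp only [Matrix.mul_assoc]
      _ = W' * V' * (W' * V') := by rw [← hF]; simp only [Matrix.mul_assoc]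
      _ = W' * V' := hG

lemma IdemEquiv.map {E : Matrix m m R} {F : Matrix n n R} (h : IdemEquiv E F) (φ : R →+* R') :
    IdemEquiv (E.map φ) (F.map φ) := by
  obtain ⟨V, W, rfl, rfl⟩ := h
  exact ⟨V.map φ, W.map φ, Matrix.map_mul.symm, Matrix.map_mul.symm⟩

lemma isIdempotentElem_map {E : Matrix m m R} (hE : IsIdempotentElem E) (φ : R →+* R') :
    IsIdempotentElem (E.map φ) := by
  rw [IsIdempotentElem, ← Matrix.map_mul, hE.eq]

/-- A matrix `E` of the form `V * W` with `W * V = 1`, that is, an idempotent matrix whose image is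
a free module of finite rank. -/
def IsFreeIdem (E : Matrix m m R) : Prop :=
  ∃ r, IdemEquiv E (1 : Matrix (Fin r) (Fin r) R)

lemma IsFreeIdem.map {E : Matrix m m R} (h : IsFreeIdem E) (φ : R →+* R') :
    IsFreeIdem (E.map φ) := by
  obtain ⟨r, hr⟩ := h
  exact ⟨r, by simpa only [Matrix.map_one φ φ.map_zero φ.map_one] using hr.map φ⟩

lemma IsFreeIdem.of_idemEquiv {E : Matrix m m R} {F : Matrix n n R} (hE : IsIdempotentElem E)
    (hEF : IdemEquiv E F) (hF : IsFreeIdem F) : IsFreeIdem E :=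
  let ⟨r, hr⟩ := hF
  ⟨r, hEF.trans hE .one hr⟩

lemma projective_range {E : Matrix m m R} (hE : IsIdempotentElem E) :
    Module.Projective R (LinearMap.range E.mulVecLin) := by
  have hfix : ∀ x ∈ LinearMap.range E.mulVecLin, E.mulVecLin x = x := by
    rintro _ ⟨z, rfl⟩
    simp [hE.eq]
  exact .of_split (LinearMap.range E.mulVecLin).subtype E.mulVecLin.rangeRestrict
    (LinearMap.ext fun x => Subtype.ext (hfix x x.2))

lemma isFreeIdem_of_free_range [Nontrivial R] {E : Matrix m m R} (hE : IsIdempotentElem E)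
    (h : Module.Free R (LinearMap.range E.mulVecLin)) : IsFreeIdem E := by
  classical
  let b := (Module.finBasis R (LinearMap.range E.mulVecLin)).equivFun
  let v := (LinearMap.range E.mulVecLin).subtype ∘ₗ b.symm.toLinearMap
  let w := b.toLinearMap ∘ₗ E.mulVecLin.rangeRestrict
  have hvw : v ∘ₗ w = E.mulVecLin := LinearMap.ext fun x => by simp [v, w]
  have hwv : w ∘ₗ v = LinearMap.id := LinearMap.ext fun x => by
    obtain ⟨z, hz⟩ := (b.symm x).2
    have hfix : E.mulVecLin.rangeRestrict (b.symm x) = b.symm x :=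
      Subtype.ext (by rw [← hz]; simp [hE.eq])
    simp [v, w, hfix]
  refine ⟨_, LinearMap.toMatrix' v, LinearMap.toMatrix' w, ?_, ?_⟩
  · rw [← LinearMap.toMatrix'_comp, hvw, ← Matrix.toLin'_apply', LinearMap.toMatrix'_toLin']
  · rw [← LinearMap.toMatrix'_comp, hwv, LinearMap.toMatrix'_id]

/-- A projective-free ring: every idempotent matrix has free image, or equivalently every finitely
generated projective module is free. The formulation through matrices involves no universe. -/
def IsProjectiveFree (R : Type*) [CommRing R] : Prop :=
  ∀ (N : ℕ) (E : Matrix (Fin N) (Fin N) R), IsIdempotentElem E → IsFreeIdem E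

lemma IsProjectiveFree.free (h : IsProjectiveFree R) (M : Type*) [AddCommGroup M] [Module R M]
    [Module.Finite R M] [Module.Projective R M] : Module.Free R M := by
  obtain ⟨N, p, s, -, -, hps⟩ := Module.Finite.exists_comp_eq_id_of_projective R M
  have hps : ∀ x, p (s x) = x := LinearMap.congr_fun hps
  obtain ⟨r, V, W, hVW, hWV⟩ := h N (LinearMap.toMatrix' (s ∘ₗ p)) <| by
    rw [IsIdempotentElem, ← LinearMap.toMatrix'_comp]
    congr 1
    exact LinearMap.ext fun x => by simp [hps]
  have hVW' (x) : V.mulVec (W.mulVec x) = s (p x) := by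
    rw [Matrix.mulVec_mulVec, hVW, LinearMap.toMatrix'_mulVec, LinearMap.comp_apply]
  have hWV' (x) : W.mulVec (V.mulVec x) = x := by
    rw [Matrix.mulVec_mulVec, hWV, Matrix.one_mulVec]
  refine .of_equiv (LinearEquiv.ofLinearMap (p ∘ₗ V.mulVecLin) (W.mulVecLin ∘ₗ s)
    (LinearMap.ext fun x => ?_) (LinearMap.ext fun x => ?_))
  · simp [hVW', hps]
  · change W.mulVec (s (p (V.mulVec x))) = x
    rw [← hVW', hWV', hWV']

lemma IsProjectiveFree.of_ringEquiv (h : IsProjectiveFree R) (e : R ≃+* R') :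
    IsProjectiveFree R' := by
  intro N E hE
  have hfree := (h N _ (isIdempotentElem_map hE e.symm.toRingHom)).map e.toRingHom
  rwa [Matrix.map_map, show (e.toRingHom ∘ e.symm.toRingHom : R' → R') = id from
    funext e.apply_symm_apply, Matrix.map_id] at hfree

lemma isProjectiveFree_of_isPrincipalIdealRing [IsDomain R] [IsPrincipalIdealRing R] :
    IsProjectiveFree R := fun _ _ hE =>
  have := projective_range hE
  isFreeIdem_of_free_range hE inferInstance

/-- A matrix `E` such that `V * W = f • E` and `W * V = f • 1` for some `V` and `W`. If `E` is
idempotent, this says that the image of `E` becomes free after inverting `f`, with a free basis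
that only needs the denominator `f`. -/
def IsFreeUpTo (f : R) (E : Matrix m m R) : Prop :=
  ∃ (r : ℕ) (V : Matrix m (Fin r) R) (W : Matrix (Fin r) m R), V * W = f • E ∧ W * V = f • 1

lemma IsFreeUpTo.map {f : R} {E : Matrix m m R} (h : IsFreeUpTo f E) (φ : R →+* R') :
    IsFreeUpTo (φ f) (E.map φ) := by
  obtain ⟨r, V, W, hVW, hWV⟩ := h
  refine ⟨r, V.map φ, W.map φ, ?_, ?_⟩
  · rw [← Matrix.map_mul, hVW]
    ext
    simp
  · rw [← Matrix.map_mul, hWV]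
    ext
    simp [Matrix.one_apply, apply_ite φ]

end IdempotentMatrices

section Suslin

variable {A : Type*} [CommRing A]

lemma monic_notMem_map_C {I : Ideal A} (hI : I ≠ ⊤) {f : A[X]} (hf : f.Monic) :
    f ∉ I.map C := fun h =>
  hI ((Ideal.eq_top_iff_one I).2 (hf.coeff_natDegree ▸ Ideal.mem_map_C_iff.1 h f.natDegree))

lemma coeff_mem_leadingCoeffNth {I : Ideal A[X]} {f g : A[X]} {n : ℕ} (hf : f.Monic)
    (hfn : f.natDegree = n + 1) (hfI : f ∈ I) (hgI : g ∈ I) (hg : g.degree ≤ n) {i : ℕ}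
    (hi : i ≤ n) : g.coeff i ∈ I.leadingCoeffNth n := by
  have htop {g : A[X]} (hgI : g ∈ I) (hg : g.degree ≤ n) : g.coeff n ∈ I.leadingCoeffNth n :=
    ⟨g, ⟨mem_degreeLE.2 hg, hgI⟩, rfl⟩
  obtain ⟨j, hj⟩ := Nat.exists_eq_add_of_le hi
  induction j generalizing i g with
  | zero => exact hj ▸ htop hgI hg
  | succ j ih =>
    set c := g.coeff n
    have hdeg : (X * g - C c * f : A[X]).degree ≤ n := by
      refine degree_le_iff_coeff_zero _ _ |>.2 fun k hk => ?_
      obtain ⟨k, rfl⟩ := Nat.exists_eq_add_one_of_ne_zero (Nat.ne_zero_of_lt (Nat.cast_lt.1 hk))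
      obtain rfl | hlt := (Nat.lt_add_one_iff.1 (Nat.cast_lt.1 hk)).eq_or_lt
      · simp [c, show f.coeff (n + 1) = 1 from hfn ▸ hf]
      · simp [coeff_eq_zero_of_degree_lt (hg.trans_lt (Nat.cast_lt.2 hlt)),
          coeff_eq_zero_of_natDegree_lt (hfn.trans_lt (Nat.add_lt_add_right hlt 1))]
    have hmem := ih (I.sub_mem (I.mul_mem_left X hgI) (I.mul_mem_left (C c) hfI)) hdeg
      (i := i + 1) (by lia) (by lia)
    rw [coeff_sub, coeff_X_mul, coeff_C_mul] at hmem
    simpa [c] using add_mem hmem (Ideal.mul_mem_right (f.coeff (i + 1)) _ (htop hgI hg))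

lemma exists_monic_mem_of_isUnit_coeff [Nontrivial A] {I : Ideal A[X]} {f g : A[X]}
    (hf : f.Monic) (hfI : f ∈ I) (hgI : g ∈ I) (hdeg : g.degree < f.degree) {i : ℕ}
    (hu : IsUnit (g.coeff i)) : ∃ h ∈ I, h.Monic ∧ h.degree < f.degree := by
  have hg0 : g ≠ 0 := fun h => hu.ne_zero (by simp [h])
  have hlt := natDegree_lt_natDegree hg0 hdeg
  obtain ⟨n, hn⟩ := Nat.exists_eq_add_one_of_ne_zero (Nat.ne_zero_of_lt hlt)
  have hmem := coeff_mem_leadingCoeffNth hf hn hfI hgI (degree_le_of_natDegree_le (by lia))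
    ((le_natDegree_of_ne_zero hu.ne_zero).trans (by lia))
  obtain ⟨h, hhI, hhdeg, hh⟩ := (I.mem_leadingCoeffNth n 1).1
    ((Ideal.eq_top_iff_one _).1 (Ideal.eq_top_of_isUnit_mem _ hmem hu))
  rw [degree_eq_natDegree hf.ne_zero, hn]
  exact ⟨h, hhI, hh, hhdeg.trans_lt (Nat.cast_lt.2 n.lt_succ_self)⟩

end Suslin

section ProjectiveModules

variable {R P : Type*} [CommRing R] [AddCommGroup P] [Module R P]

lemma mem_smul_top_of_forall_dual [Module.Projective R P] {I : Ideal R} {y : P}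
    (h : ∀ φ : Module.Dual R P, φ y ∈ I) : y ∈ I • (⊤ : Submodule R P) := by
  obtain ⟨s, hs⟩ := Module.projective_def.1 ‹Module.Projective R P›
  rw [← hs y, Finsupp.linearCombination_apply]
  exact sum_mem fun x _ => Submodule.smul_mem_smul (h (Finsupp.lapply x ∘ₗ s)) trivial

lemma dual_apply_mem_of_mem_smul_top {I : Ideal R} {y : P} (hy : y ∈ I • (⊤ : Submodule R P))
    (φ : Module.Dual R P) : φ y ∈ I :=
  Submodule.smul_induction_on hy (fun r hr x _ => by simpa using I.mul_mem_right (φ x) hr)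
    fun x y hx hy => by simpa using I.add_mem hx hy

lemma mem_smul_top_of_smul_mem [Module.Projective R P] {𝔭 : Ideal R} [h𝔭 : 𝔭.IsPrime] {a : R}
    (ha : a ∉ 𝔭) {y : P} (hy : a • y ∈ 𝔭 • (⊤ : Submodule R P)) :
    y ∈ 𝔭 • (⊤ : Submodule R P) :=
  mem_smul_top_of_forall_dual fun φ => (h𝔭.mem_or_mem <| by
    simpa using dual_apply_mem_of_mem_smul_top hy φ).resolve_left ha

/- After reduction modulo `ker π` the image of `ψ₀` is generated by a single element, by which `ψ₀`
can be divided. -/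
lemma exists_dual_map_eq_one [Module.Projective R P] {B : Type*} [CommRing B] [IsDomain B]
    [IsPrincipalIdealRing B] {π : R →+* B} (hπ : Function.Surjective π) {ψ₀ : Module.Dual R P}
    {v₁ : P} (h₁ : π (ψ₀ v₁) ≠ 0) :
    ∃ (ψ : Module.Dual R P) (e : P), π (ψ e) = 1 ∧ ∀ v, ψ₀ v = 0 → π (ψ v) = 0 := by
  let _ := π.toAlgebra
  obtain ⟨d, hd⟩ := (IsPrincipalIdealRing.principal (Ideal.map π (LinearMap.range ψ₀))).principal
  have hdvd (y) : ∃ c, d * c = π (ψ₀ y) := by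
    have hy : π (ψ₀ y) ∈ Ideal.map π (LinearMap.range ψ₀) := Ideal.mem_map_of_mem π ⟨y, rfl⟩
    rw [hd] at hy
    obtain ⟨c, hc⟩ := Ideal.mem_span_singleton.1 hy
    exact ⟨c, hc.symm⟩
  choose q hq using hdvd
  have hd0 : d ≠ 0 := by
    rintro rfl
    exact h₁ (by rw [← hq, zero_mul])
  obtain ⟨e, he⟩ : ∃ e, π (ψ₀ e) = d := by
    have hmem : d ∈ Ideal.map π (LinearMap.range ψ₀) := hd ▸ Ideal.mem_span_singleton_self d
    obtain ⟨_, ⟨e, rfl⟩, he⟩ := (Ideal.mem_map_iff_of_surjective π hπ).1 hmem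
    exact ⟨e, he⟩
  let qLin : P →ₗ[R] B :=
    { toFun := q
      map_add' x y := mul_left_cancel₀ hd0 (by rw [mul_add]; simp only [hq, map_add])
      map_smul' a x := mul_left_cancel₀ hd0 (by
        rw [RingHom.id_apply, mul_smul_comm, Algebra.smul_def]
        simp only [hq, map_smul, smul_eq_mul, map_mul]; rfl) }
  obtain ⟨ψ, hψ⟩ := Module.projective_lifting_property (Algebra.linearMap R B) qLin hπ
  have hψ (y) : d * π (ψ y) = π (ψ₀ y) := by rw [← hq]; exact congr(d * $hψ y)
  refine ⟨ψ, e, mul_left_cancel₀ hd0 ?_, fun v hv => mul_left_cancel₀ hd0 ?_⟩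
  · rw [hψ, he, mul_one]
  · rw [hψ, hv, map_zero, mul_zero]

/-- The projection onto `ker φ` along `p`, where `φ p = 1`. -/
def kerProjection (φ : Module.Dual R P) (p : P) (hφ : φ p = 1) : P →ₗ[R] LinearMap.ker φ :=
  (LinearMap.id - LinearMap.toSpanSingleton R P p ∘ₗ φ).codRestrict _ fun x => by simp [hφ]

variable {φ : Module.Dual R P} {p : P} (hφ : φ p = 1)

lemma coe_kerProjection (x : P) : (kerProjection φ p hφ x : P) = x - φ x • p := rfl

lemma kerProjection_coe (x : LinearMap.ker φ) : kerProjection φ p hφ x = x :=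
  Subtype.ext <| by simp [coe_kerProjection]

lemma kerProjection_self : kerProjection φ p hφ p = 0 :=
  Subtype.ext <| by simp [coe_kerProjection, hφ]

include hφ in
lemma finite_ker_of_apply_eq_one [Module.Finite R P] : Module.Finite R (LinearMap.ker φ) :=
  .of_surjective (kerProjection φ p hφ) fun x => ⟨x, kerProjection_coe hφ x⟩

include hφ in
lemma projective_ker_of_apply_eq_one [Module.Projective R P] :
    Module.Projective R (LinearMap.ker φ) :=
  .of_split (LinearMap.ker φ).subtype (kerProjection φ p hφ)
    (LinearMap.ext (kerProjection_coe hφ))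

include hφ in
lemma free_of_free_ker [Module.Free R (LinearMap.ker φ)] : Module.Free R P := by
  refine .of_equiv (M := R × LinearMap.ker φ) (LinearEquiv.ofLinearMap
    ((LinearMap.toSpanSingleton R P p).coprod (LinearMap.ker φ).subtype)
    (φ.prod (kerProjection φ p hφ)) ?_ ?_)
  · exact LinearMap.ext fun x => by simp [coe_kerProjection]
  · exact LinearMap.ext fun x => by simp [hφ, kerProjection_self, kerProjection_coe]

include hφ in
/- Dividing `R ^ (n + 1)` by `w p` amounts to dropping the first coordinate once the first
coordinate of `w p` has been inverted. -/
lemma exists_ker_comp_eq_smul {n : ℕ} {v : (Fin (n + 1) → R) →ₗ[R] P}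
    {w : P →ₗ[R] (Fin (n + 1) → R)} {f : R} (hvw : ∀ x, v (w x) = f • x)
    (hwv : ∀ y, w (v y) = f • y) :
    ∃ (v' : (Fin n → R) →ₗ[R] LinearMap.ker φ) (w' : LinearMap.ker φ →ₗ[R] (Fin n → R)),
      (∀ x, v' (w' x) = (w p 0 * f) • x) ∧ ∀ y, w' (v' y) = (w p 0 * f) • y := by
  let ι : (Fin n → R) →ₗ[R] (Fin (n + 1) → R) :=
    LinearMap.pi (Fin.cons 0 fun i => LinearMap.proj i)
  let q : (Fin (n + 1) → R) →ₗ[R] (Fin n → R) :=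
    LinearMap.pi fun i => w p 0 • LinearMap.proj i.succ - w p i.succ • LinearMap.proj 0
  have hιq (y) : ι (q y) = w p 0 • y - y 0 • w p := by
    ext i
    cases i using Fin.cases <;> simp [ι, q, mul_comm]
  have hqι (y) : q (ι y) = w p 0 • y := by ext; simp [ι, q]
  have hqp : q (w p) = 0 := by ext; simp [q, mul_comm]
  refine ⟨kerProjection φ p hφ ∘ₗ v ∘ₗ ι, q ∘ₗ w ∘ₗ (LinearMap.ker φ).subtype,
    fun x => ?_, fun y => ?_⟩
  · simp only [LinearMap.comp_apply, Submodule.subtype_apply, hιq, map_sub, map_smul, hvw,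
      kerProjection_self, kerProjection_coe, smul_zero, sub_zero, mul_smul]
  · simp only [LinearMap.comp_apply, Submodule.subtype_apply, coe_kerProjection, map_sub, map_smul,
      hwv, hqp, hqι, smul_zero, sub_zero, mul_comm _ f, mul_smul]

end ProjectiveModules

section Horrocks

open IsLocalRing

variable {A : Type*} [CommRing A] [IsLocalRing A]

lemma eq_top_of_monic_mem {I : Ideal A[X]} {f g : A[X]} (hf : f.Monic) (hfI : f ∈ I) (hgI : g ∈ I)
    (hg : g - 1 ∈ (maximalIdeal A).map C) : I = ⊤ := by
  by_contra hI
  obtain ⟨J, hJ, hIJ⟩ := Ideal.exists_le_maximal I hI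
  have hmax : (J.comap C).IsMaximal := by
    have := Ideal.bot_quotient_isMaximal_iff J |>.2 hJ
    have := Ideal.isMaximal_comap_of_isIntegral_of_isMaximal' _
      (hf.quotient_isIntegral (hIJ hfI)) (⊥ : Ideal (A[X] ⧸ J))
    convert this
    exact Ideal.ext fun x => (Ideal.Quotient.eq_zero_iff_mem (I := J) (a := C x)).symm
  have hsub := J.sub_mem (hIJ hgI)
    (Ideal.map_le_iff_le_comap.2 (eq_maximalIdeal hmax).ge hg)
  rw [sub_sub_cancel] at hsub
  exact hJ.ne_top (J.eq_top_iff_one.2 hsub)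

variable {P : Type*} [AddCommGroup P] [Module A[X] P]

lemma eq_top_of_monic_smul_mem [Module.Finite A[X] P] {N : Submodule A[X] P} {f : A[X]}
    (hf : f.Monic) (hfN : ∀ x, f • x ∈ N)
    (hN : ⊤ ≤ N ⊔ (maximalIdeal A).map C • (⊤ : Submodule A[X] P)) : N = ⊤ := by
  obtain ⟨r, hr, hrN⟩ :=
    Submodule.exists_sub_one_mem_and_smul_le_of_fg_of_le_sup Module.Finite.fg_top le_top hN
  have hcolon := eq_top_of_monic_mem (I := N.colon Set.univ) hf
    (Submodule.mem_colon.2 fun x _ => hfN x)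
    (Submodule.mem_colon.2 fun x _ => hrN (Submodule.smul_mem_pointwise_smul x r ⊤ trivial)) hr
  refine Submodule.eq_top_iff'.2 fun x => ?_
  have hone := Submodule.mem_colon.1 ((Ideal.eq_top_iff_one _).1 hcolon) x trivial
  rwa [one_smul] at hone

lemma mem_map_C_of_degree_lt_minimal {I : Ideal A[X]} {h : A[X]} (hh : h.Monic) (hhI : h ∈ I)
    (hmin : ∀ g ∈ I, g.Monic → h.degree ≤ g.degree) {g : A[X]} (hg : g ∈ I)
    (hdeg : g.degree < h.degree) : g ∈ (maximalIdeal A).map C := by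
  refine Ideal.mem_map_C_iff.2 fun i => (mem_maximalIdeal _).2 fun hu => ?_
  obtain ⟨g', hg', hmonic, hlt⟩ := exists_monic_mem_of_isUnit_coeff hh hhI hg hdeg hu
  exact hlt.not_ge (hmin g' hg' hmonic)

/- The generator is a preimage under `w` of a monic polynomial of minimal degree in the range of
`w`; by Suslin's lemma it generates modulo the maximal ideal of `A`. -/
lemma free_of_dual_smul_eq_monic_smul [Module.Finite A[X] P] [Module.Projective A[X] P] {v : P}
    {w : Module.Dual A[X] P} {f : A[X]} (hf : f.Monic) (hvw : ∀ x, w x • v = f • x)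
    (hwv : w v = f) : Module.Free A[X] P := by
  have hw : Function.Injective w := by
    refine (injective_iff_map_eq_zero w).2 fun x hx =>
      hf.isRegular.isSMulRegular.right_eq_zero_of_smul ?_
    rw [← hvw, hx, zero_smul]
  obtain ⟨h, ⟨⟨e, rfl⟩, hmonic⟩, hmin⟩ :=
    (measure (natDegree : A[X] → ℕ)).wf.has_min {h | h ∈ LinearMap.range w ∧ h.Monic}
      ⟨f, ⟨v, hwv⟩, hf⟩
  have hmin : ∀ g ∈ LinearMap.range w, g.Monic → (w e).degree ≤ g.degree := fun g hg hgm => by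
    rw [degree_eq_natDegree hmonic.ne_zero, degree_eq_natDegree hgm.ne_zero]
    exact Nat.cast_le.2 (not_lt.1 (hmin g ⟨hg, hgm⟩))
  have htop : Submodule.span A[X] {e} = ⊤ := by
    refine eq_top_of_monic_smul_mem hmonic (fun x => ?_) fun y _ => ?_
    · exact Submodule.mem_span_singleton.2 ⟨w x, hw (by simp [mul_comm])⟩
    · set z := y - (w y /ₘ w e) • e with hz
      have hwz : w z = w y %ₘ w e := by
        rw [modByMonic_eq_sub_mul_div, hz, map_sub, map_smul, smul_eq_mul, mul_comm]
      have hzm : w z ∈ (maximalIdeal A).map C := mem_map_C_of_degree_lt_minimal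
        (I := LinearMap.range w) hmonic ⟨e, rfl⟩ hmin ⟨z, rfl⟩
        (hwz ▸ degree_modByMonic_lt _ hmonic)
      have hzP := mem_smul_top_of_smul_mem (P := P)
        (monic_notMem_map_C (maximalIdeal.isMaximal A).ne_top hf)
        (hvw z ▸ Submodule.smul_mem_smul hzm Submodule.mem_top)
      rw [← sub_add_cancel y ((w y /ₘ w e) • e), add_comm]
      exact Submodule.add_mem_sup
        (Submodule.smul_mem _ _ (Submodule.mem_span_singleton_self e)) hzP
  refine .of_equiv (LinearEquiv.ofBijective (LinearMap.toSpanSingleton A[X] P e) ⟨?_, fun y => ?_⟩)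
  · refine (injective_iff_map_eq_zero _).2 fun a ha => hmonic.isRegular.right ?_
    simpa using congr(w $ha)
  · exact Submodule.mem_span_singleton.1 (htop ▸ Submodule.mem_top)

lemma exists_dual_apply_eq_one [Module.Projective A[X] P] {w₀ w₁ : Module.Dual A[X] P}
    {v₀ v₁ : P} (h₀ : (w₀ v₀).Monic) (h₁ : (w₁ v₁).Monic) (h₁₀ : w₁ v₀ = 0) :
    ∃ (φ : Module.Dual A[X] P) (p : P), φ p = 1 ∧ (w₀ p).Monic := by
  let π := mapRingHom (residue A)
  obtain ⟨ψ, e, hψe, hψ⟩ := exists_dual_map_eq_one (π := π)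
    (map_surjective _ residue_surjective) (h₁.map (residue A)).ne_zero
  set p := e + (X ^ ((w₀ e).natDegree + 1) : A[X]) • v₀ with hp
  have hmonic : (w₀ p).Monic := by
    rw [hp, map_add, map_smul, smul_eq_mul]
    refine ((monic_X_pow _).mul h₀).add_of_right (degree_le_natDegree.trans_lt ?_)
    rw [h₀.degree_mul, degree_X_pow, degree_eq_natDegree h₀.ne_zero]
    norm_cast
    lia
  have hψp : ψ p - 1 ∈ (maximalIdeal A).map C := by
    refine Ideal.mem_map_C_iff.2 fun i => (residue_eq_zero_iff _).1 ?_
    have hπ : π (ψ p - 1) = 0 := by simp [hp, hψe, hψ v₀ h₁₀]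
    rw [← coeff_map]
    exact congr(coeff $hπ i)
  have htop := eq_top_of_monic_mem (I := LinearMap.range (Module.Dual.eval A[X] P p)) hmonic
    ⟨w₀, rfl⟩ ⟨ψ, rfl⟩ hψp
  obtain ⟨φ, hφ⟩ := (Ideal.eq_top_iff_one _).1 htop
  exact ⟨φ, p, hφ, hmonic⟩

theorem free_of_monic_comp_eq_smul [Module.Finite A[X] P] [Module.Projective A[X] P] {n : ℕ}
    {v : (Fin n → A[X]) →ₗ[A[X]] P} {w : P →ₗ[A[X]] (Fin n → A[X])} {f : A[X]} (hf : f.Monic)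
    (hvw : ∀ x, v (w x) = f • x) (hwv : ∀ y, w (v y) = f • y) : Module.Free A[X] P := by
  induction n generalizing P f with
  | zero =>
    have : Subsingleton P := subsingleton_of_forall_eq 0 fun x =>
      hf.isRegular.isSMulRegular.right_eq_zero_of_smul <| by
        rw [← hvw, Subsingleton.elim (w x) 0, map_zero]
    exact .of_subsingleton _ _
  | succ n ih =>
    cases n with
    | zero =>
      refine free_of_dual_smul_eq_monic_smul (v := v 1) (w := LinearMap.proj 0 ∘ₗ w) hf
        (fun x => ?_) (by simp [hwv])
      rw [← hvw, ← map_smul]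
      congr 1
      ext i : 1
      simp [Subsingleton.elim (α := Fin 1) i 0]
    | succ n =>
      obtain ⟨φ, p, hφ, hp⟩ := exists_dual_apply_eq_one
        (w₀ := LinearMap.proj 0 ∘ₗ w) (w₁ := LinearMap.proj 1 ∘ₗ w) (v₀ := v (Pi.single 0 1))
        (v₁ := v (Pi.single 1 1)) (by simpa [hwv] using hf) (by simpa [hwv] using hf)
        (by simp [hwv])
      obtain ⟨v', w', hvw', hwv'⟩ := exists_ker_comp_eq_smul hφ hvw hwv
      have := finite_ker_of_apply_eq_one hφ
      have := projective_ker_of_apply_eq_one hφ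
      have := ih (hp.mul hf) hvw' hwv'
      exact free_of_free_ker hφ

theorem isFreeIdem_of_isFreeUpTo_monic_of_isLocalRing {m : Type*} [Fintype m] {E : Matrix m m A[X]}
    (hE : IsIdempotentElem E) {f : A[X]} (hf : f.Monic) (hfE : IsFreeUpTo f E) : IsFreeIdem E := by
  obtain ⟨r, V, W, hVW, hWV⟩ := hfE
  have hWEV : W * E * V = f • (1 : Matrix (Fin r) (Fin r) A[X]) := by
    refine Matrix.ext fun i j => hf.isRegular.left ?_
    have h : f • (W * E * V) = f • (f • (1 : Matrix (Fin r) (Fin r) A[X])) := calc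
      f • (W * E * V) = W * (f • E) * V := by rw [Matrix.mul_smul, Matrix.smul_mul]
      _ = (W * V) * (W * V) := by rw [← hVW]; simp only [Matrix.mul_assoc]
      _ = f • (f • 1) := by rw [hWV, Matrix.smul_mul, Matrix.one_mul]
    exact congr($h i j)
  have := projective_range hE
  refine isFreeIdem_of_free_range hE <| free_of_monic_comp_eq_smul
    (v := E.mulVecLin.rangeRestrict ∘ₗ V.mulVecLin)
    (w := W.mulVecLin ∘ₗ (LinearMap.range E.mulVecLin).subtype) hf ?_ fun y => ?_
  · rintro ⟨_, z, rfl⟩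
    have hEVWE : E * V * W * E = f • E := by
      rw [Matrix.mul_assoc E V W, hVW, Matrix.mul_smul, hE.eq, Matrix.smul_mul, hE.eq]
    exact Subtype.ext <| by simp [← Matrix.mul_assoc, hEVWE, Matrix.smul_mulVec]
  · simp [← Matrix.mul_assoc, hWEV, Matrix.smul_mulVec]

end Horrocks

section Localization

variable {R T l m n : Type*} [CommRing R] [CommRing T] [Algebra R T] (M : Submonoid R)
  [IsLocalization M T] [Finite m] [Finite n]

lemma exists_map_eq_smul (q : Matrix m n T) :
    ∃ c ∈ M, ∃ p : Matrix m n R, p.map (algebraMap R T) = algebraMap R T c • q := by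
  obtain ⟨⟨c, hc⟩, hq⟩ :=
    IsLocalization.exist_integer_multiples_of_finite M fun k : m × n => q k.1 k.2
  choose p hp using hq
  exact ⟨c, hc, fun i j => p (i, j),
    Matrix.ext fun i j => (hp (i, j)).trans (Algebra.smul_def c (q i j))⟩

lemma exists_smul_eq_of_map_eq {p q : Matrix m n R}
    (h : p.map (algebraMap R T) = q.map (algebraMap R T)) : ∃ c ∈ M, c • p = c • q := by
  have hentry (k : m × n) : ∃ c : M, (c : R) * p k.1 k.2 = c * q k.1 k.2 :=
    IsLocalization.exists_of_eq congr($h k.1 k.2)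
  choose c hc using hentry
  have := Fintype.ofFinite (m × n)
  refine ⟨↑(∏ k, c k), SetLike.coe_mem _, Matrix.ext fun i j => ?_⟩
  obtain ⟨a, ha⟩ := Finset.dvd_prod_of_mem c (Finset.mem_univ (i, j))
  have hij := hc (i, j)
  simp only [ha, Submonoid.coe_mul, Matrix.smul_apply, smul_eq_mul]
  linear_combination (a : R) * hij

lemma exists_isFreeUpTo_of_isFreeIdem_map [Fintype l] {E : Matrix l l R}
    (h : IsFreeIdem (E.map (algebraMap R T))) : ∃ c ∈ M, IsFreeUpTo c E := by
  obtain ⟨r, V, W, hVW, hWV⟩ := h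
  obtain ⟨a, ha, V', hV⟩ := exists_map_eq_smul M V
  obtain ⟨b, hb, W', hW⟩ := exists_map_eq_smul M W
  obtain ⟨c, hc, hVW'⟩ := exists_smul_eq_of_map_eq (T := T) M
    (p := V' * W') (q := (a * b) • E) <| by
      rw [Matrix.map_mul, hV, hW, Matrix.smul_mul, Matrix.mul_smul, hVW, smul_smul]
      ext
      simp
  obtain ⟨d, hd, hWV'⟩ := exists_smul_eq_of_map_eq (T := T) M
    (p := W' * V') (q := (a * b) • 1) <| by
      rw [Matrix.map_mul, hV, hW, Matrix.smul_mul, Matrix.mul_smul, hWV, smul_smul]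
      ext
      simp [Matrix.one_apply, mul_comm, apply_ite (algebraMap R T)]
  refine ⟨c * d * (a * b), mul_mem (mul_mem hc hd) (mul_mem ha hb), r, (c * d) • V', W', ?_, ?_⟩
  · rw [Matrix.smul_mul, mul_comm c, mul_smul, hVW', smul_smul, smul_smul]
  · rw [Matrix.mul_smul, mul_smul, hWV', smul_smul, smul_smul]

end Localization

section Scaling

variable {R T m n : Type*} [CommRing R] [CommRing T]

/-- The substitution of `c * X` for `X`. -/
noncomputable def scaleX (c : R) : R[X] →+* R[X] :=
  compRingHom (C c * X)

@[simp]
lemma coeff_scaleX (c : R) (p : R[X]) (k : ℕ) : (scaleX c p).coeff k = p.coeff k * c ^ k :=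
  comp_C_mul_X_coeff

@[simp]
lemma eval_zero_scaleX (c : R) (p : R[X]) : (scaleX c p).eval 0 = p.eval 0 := by
  simp [← coeff_zero_eq_eval_zero]

lemma map_scaleX_map_scaleX (c d : R) (p : Matrix m n R[X]) :
    (p.map (scaleX c)).map (scaleX d) = p.map (scaleX (c * d)) := by
  ext
  simp [mul_pow, mul_assoc]

lemma map_scaleX_map_mapRingHom (φ : R →+* T) (c : R) (p : Matrix m n R[X]) :
    (p.map (scaleX c)).map (mapRingHom φ) = (p.map (mapRingHom φ)).map (scaleX (φ c)) := by
  ext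
  simp

lemma map_scaleX_map_evalRingHom_zero (c : R) (p : Matrix m n R[X]) :
    (p.map (scaleX c)).map (evalRingHom 0) = p.map (evalRingHom 0) := by
  ext
  simp

variable [Algebra R T] (M : Submonoid R) [IsLocalization M T]

/- Every coefficient of `q` but the constant one acquires a factor `d`, which clears its
denominator. -/
lemma exists_map_eq_map_scaleX [Finite m] [Finite n] {q : Matrix m n T[X]} {p₀ : Matrix m n R}
    (hq : q.map (evalRingHom 0) = p₀.map (algebraMap R T)) :
    ∃ c ∈ M, ∀ d, c ∣ d → ∃ p : Matrix m n R[X],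
      p.map (mapRingHom (algebraMap R T)) = q.map (scaleX (algebraMap R T d)) ∧
        p.map (evalRingHom 0) = p₀ := by
  let := Polynomial.algebra (R := R) (A := T)
  have := Polynomial.isLocalization M T
  obtain ⟨_, ⟨c, hc, rfl⟩, p, hp⟩ := exists_map_eq_smul (M.map C) q
  refine ⟨c, hc, ?_⟩
  rintro _ ⟨e, rfl⟩
  refine ⟨.of fun i j => C (p₀ i j) + C e * X * scaleX (c * e) (p i j).divX, ?_, ?_⟩
  · refine Matrix.ext fun i j => Polynomial.ext fun k => ?_
    cases k with
    | zero => simpa [← coeff_zero_eq_eval_zero] using congr($hq i j).symm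
    | succ k =>
      have hcoeff : algebraMap R T ((p i j).coeff (k + 1)) =
          algebraMap R T c * (q i j).coeff (k + 1) := by
        simpa [Polynomial.algebraMap_def] using congr(($hp i j).coeff (k + 1))
      suffices algebraMap R T e * (algebraMap R T ((p i j).coeff (k + 1)) *
          (algebraMap R T c * algebraMap R T e) ^ k) =
            (q i j).coeff (k + 1) * (algebraMap R T c * algebraMap R T e) ^ (k + 1) by
        simpa [mul_assoc, coeff_divX, coeff_C_succ]
      rw [hcoeff]
      ring
  · ext
    simp

lemma exists_map_scaleX_eq_of_map_eq [Finite m] [Finite n] {p q : Matrix m n R[X]}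
    (h : p.map (mapRingHom (algebraMap R T)) = q.map (mapRingHom (algebraMap R T)))
    (h₀ : p.map (evalRingHom 0) = q.map (evalRingHom 0)) :
    ∃ c ∈ M, ∀ d, c ∣ d → p.map (scaleX d) = q.map (scaleX d) := by
  let := Polynomial.algebra (R := R) (A := T)
  have := Polynomial.isLocalization M T
  obtain ⟨_, ⟨c, hc, rfl⟩, hpq⟩ := exists_smul_eq_of_map_eq (T := T[X]) (M.map C) h
  refine ⟨c, hc, ?_⟩
  rintro _ ⟨e, rfl⟩
  refine Matrix.ext fun i j => Polynomial.ext fun k => ?_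
  cases k with
  | zero => simpa [← coeff_zero_eq_eval_zero] using congr($h₀ i j)
  | succ k =>
    have hcoeff : c * (p i j).coeff (k + 1) = c * (q i j).coeff (k + 1) := by
      simpa using congr(($hpq i j).coeff (k + 1))
    simp only [Matrix.map_apply, coeff_scaleX]
    linear_combination e * (c * e) ^ k * hcoeff

lemma exists_idemEquiv_map_scaleX [Fintype m] [Fintype n] {E : Matrix m m R[X]}
    {F : Matrix n n R[X]} {P : Matrix m n T[X]} {Q : Matrix n m T[X]}
    {P₀ : Matrix m n R} {Q₀ : Matrix n m R}
    (hPQ : P * Q = E.map (mapRingHom (algebraMap R T)))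
    (hQP : Q * P = F.map (mapRingHom (algebraMap R T)))
    (hP : P.map (evalRingHom 0) = P₀.map (algebraMap R T))
    (hQ : Q.map (evalRingHom 0) = Q₀.map (algebraMap R T))
    (hPQ₀ : P₀ * Q₀ = E.map (evalRingHom 0)) (hQP₀ : Q₀ * P₀ = F.map (evalRingHom 0)) :
    ∃ c ∈ M, IdemEquiv (E.map (scaleX c)) (F.map (scaleX c)) := by
  obtain ⟨a, ha, hP⟩ := exists_map_eq_map_scaleX M hP
  obtain ⟨b, hb, hQ⟩ := exists_map_eq_map_scaleX M hQ
  obtain ⟨p, hp, hp₀⟩ := hP (a * b) ⟨b, rfl⟩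
  obtain ⟨q, hq, hq₀⟩ := hQ (a * b) ⟨a, mul_comm a b⟩
  obtain ⟨c, hc, hpq⟩ := exists_map_scaleX_eq_of_map_eq (T := T) M
    (p := p * q) (q := E.map (scaleX (a * b)))
    (by rw [map_scaleX_map_mapRingHom, Matrix.map_mul, hp, hq, ← Matrix.map_mul, hPQ])
    (by rw [map_scaleX_map_evalRingHom_zero, Matrix.map_mul, hp₀, hq₀, hPQ₀])
  obtain ⟨d, hd, hqp⟩ := exists_map_scaleX_eq_of_map_eq (T := T) M
    (p := q * p) (q := F.map (scaleX (a * b)))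
    (by rw [map_scaleX_map_mapRingHom, Matrix.map_mul, hq, hp, ← Matrix.map_mul, hQP])
    (by rw [map_scaleX_map_evalRingHom_zero, Matrix.map_mul, hq₀, hp₀, hQP₀])
  refine ⟨a * b * (c * d), mul_mem (mul_mem ha hb) (mul_mem hc hd), p.map (scaleX (c * d)),
    q.map (scaleX (c * d)), ?_, ?_⟩
  · rw [← Matrix.map_mul, hpq _ ⟨d, rfl⟩, map_scaleX_map_scaleX]
  · rw [← Matrix.map_mul, hqp _ ⟨c, mul_comm c d⟩, map_scaleX_map_scaleX]

end Scaling

section Quillen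

variable {R A L m n : Type*} [CommRing R] [CommRing A] [CommRing L] [Fintype m] [Fintype n]

/-- An idempotent matrix over `A[X]` whose image is extended from `A`, that is, isomorphic to the
base change to `A[X]` of its fibre at `X = 0`. -/
def IsExtended (E : Matrix m m A[X]) : Prop :=
  IdemEquiv E (E.map (C.comp (evalRingHom 0)))

lemma IsFreeIdem.isExtended {E : Matrix m m A[X]} (hE : IsIdempotentElem E) (h : IsFreeIdem E) :
    IsExtended E := by
  obtain ⟨r, hr⟩ := h
  have hr₀ := hr.map (C.comp (evalRingHom 0))
  rw [Matrix.map_one _ (map_zero _) (map_one _)] at hr₀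
  exact hr.trans hE (isIdempotentElem_map hE _) hr₀.symm

/-- The substitution `X ↦ X + c * Y` from `A[X]` to `A[X][Y]`. -/
noncomputable def shift (c : A) : A[X] →+* A[X][X] :=
  eval₂RingHom (C.comp C) (C X + C (C c) * X)

lemma mapRingHom_comp_shift [Algebra A L] (c : A) :
    (mapRingHom (mapRingHom (algebraMap A L))).comp (shift c) =
      (shift (algebraMap A L c)).comp (mapRingHom (algebraMap A L)) := by
  ext <;> simp [shift]

lemma scaleX_comp_shift (c d : A) : (scaleX (C c)).comp (shift d) = shift (d * c) := by
  ext <;> simp [shift, scaleX, mul_assoc]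

lemma evalRingHom_zero_comp_shift (c : A) : (evalRingHom 0).comp (shift c) = .id A[X] := by
  ext <;> simp [shift]

lemma shift_comp_C (c : A) : (shift c).comp C = C.comp C := by
  ext
  simp [shift]

lemma shift_zero : shift (0 : A) = C := by
  ext <;> simp [shift]

lemma map_mul_map_mul_map_mul_map {G : Matrix m m R} {F : Matrix n n R} {V : Matrix m n R}
    {W : Matrix n m R} (hG : IsIdempotentElem G) (hVW : V * W = G) (hWV : W * V = F)
    {i j : R →+* A} (hF : F.map i = F.map j) :
    V.map i * W.map j * (V.map j * W.map i) = G.map i := by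
  calc V.map i * W.map j * (V.map j * W.map i)
      = V.map i * (W * V).map j * W.map i := by simp only [Matrix.map_mul, Matrix.mul_assoc]
    _ = V.map i * (W * V).map i * W.map i := by rw [hWV, hF]
    _ = (V * W * (V * W)).map i := by simp only [Matrix.map_mul, Matrix.mul_assoc]
    _ = G.map i := by rw [hVW, hG.eq]

/- An isomorphism between `E` and its fibre at `X = 0` over `L[X]`, which does not see the shift,
can be composed with a shift of its inverse. The composite is the identity at `Y = 0`, so that it
is defined over `A[X][Y]` after scaling `Y`. -/
lemma exists_idemEquiv_map_shift [Algebra A L] (M : Submonoid A) [IsLocalization M L]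
    {E : Matrix m m A[X]} (hE : IsIdempotentElem E)
    (h : IsExtended (E.map (mapRingHom (algebraMap A L)))) :
    ∃ c ∈ M, IdemEquiv (E.map C) (E.map (shift c)) := by
  let := Polynomial.algebra (R := A) (A := L)
  have := Polynomial.isLocalization M L
  set G := E.map (mapRingHom (algebraMap A L)) with hG
  have hGid : IsIdempotentElem G := isIdempotentElem_map hE _
  obtain ⟨V, W, hVW, hWV⟩ := h
  have hF : (G.map (C.comp (evalRingHom 0))).map (shift (0 : L)) =
      (G.map (C.comp (evalRingHom 0))).map (shift (1 : L)) := by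
    simp only [Matrix.map_map, ← RingHom.coe_comp, ← RingHom.comp_assoc, shift_comp_C]
  have hshift (c : A) : G.map (shift (algebraMap A L c)) =
      (E.map (shift c)).map (mapRingHom (mapRingHom (algebraMap A L))) := by
    simp only [hG, Matrix.map_map, ← RingHom.coe_comp, mapRingHom_comp_shift]
  have hfib (c d : L) : (V.map (shift c) * W.map (shift d)).map (evalRingHom 0) = G := by
    simp only [Matrix.map_mul, Matrix.map_map, ← RingHom.coe_comp, evalRingHom_zero_comp_shift]
    simpa using hVW
  have hfib' (c : A) : E * E = (E.map (shift c)).map (evalRingHom 0) := by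
    rw [hE.eq, Matrix.map_map, ← RingHom.coe_comp, evalRingHom_zero_comp_shift]
    simp
  obtain ⟨_, ⟨c, hc, rfl⟩, hEF⟩ := exists_idemEquiv_map_scaleX (T := L[X]) (M.map C)
    (E := E.map (shift (0 : A))) (F := E.map (shift (1 : A)))
    (P := V.map (shift (0 : L)) * W.map (shift (1 : L)))
    (Q := V.map (shift (1 : L)) * W.map (shift (0 : L))) (P₀ := E) (Q₀ := E)
    ((map_mul_map_mul_map_mul_map hGid hVW hWV hF).trans (map_zero (algebraMap A L) ▸ hshift 0))
    ((map_mul_map_mul_map_mul_map hGid hVW hWV hF.symm).trans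
      (map_one (algebraMap A L) ▸ hshift 1))
    (hfib 0 1) (hfib 1 0) (hfib' 0) (hfib' 1)
  rw [Matrix.map_map, Matrix.map_map, ← RingHom.coe_comp, ← RingHom.coe_comp, scaleX_comp_shift,
    scaleX_comp_shift, zero_mul, one_mul, shift_zero] at hEF
  exact ⟨c, hc, hEF⟩

lemma IdemEquiv.map_eval₂RingHom {E : Matrix m m A[X]} {c : A}
    (h : IdemEquiv (E.map C) (E.map (shift c))) (φ : A →+* R) (a r : R) :
    IdemEquiv (E.map (eval₂RingHom φ a)) (E.map (eval₂RingHom φ (a + φ c * r))) := by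
  have h' := h.map (eval₂RingHom (eval₂RingHom φ a) r)
  rw [Matrix.map_map, Matrix.map_map, ← RingHom.coe_comp, ← RingHom.coe_comp] at h'
  convert h' using 3 <;> ext <;> simp [shift]

/-- The ideal of those `c` for which the image of the idempotent matrix `E` is invariant under
`X ↦ X + c * Y`. By Quillen, it is the unit ideal if and only if this image is extended from `A`. -/
def quillenIdeal (E : Matrix m m A[X]) (hE : IsIdempotentElem E) : Ideal A where
  carrier := {c | IdemEquiv (E.map C) (E.map (shift c))}
  zero_mem' := by
    rw [Set.mem_ofPred_eq, shift_zero]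
    exact .refl (isIdempotentElem_map hE C)
  add_mem' {c d} hc hd := by
    have hcd := hd.map_eval₂RingHom (C.comp C) (C X + C (C c) * X) X
    rw [add_assoc, RingHom.comp_apply, ← add_mul, ← C_add, ← C_add] at hcd
    exact hc.trans (isIdempotentElem_map hE _) (isIdempotentElem_map hE _) hcd
  smul_mem' b c hc := by
    have hbc := hc.map_eval₂RingHom (C.comp C) (C X) (C (C b) * X)
    rw [RingHom.comp_apply, ← mul_assoc, ← C_mul, ← C_mul, mul_comm c] at hbc
    rwa [show eval₂RingHom (C.comp C : A →+* A[X][X]) (C X) = C by ext <;> simp] at hbc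

theorem isExtended_of_forall_isMaximal {E : Matrix m m A[X]} (hE : IsIdempotentElem E)
    (h : ∀ (𝔪 : Ideal A) [𝔪.IsMaximal],
      IsExtended (E.map (mapRingHom (algebraMap A (Localization.AtPrime 𝔪))))) :
    IsExtended E := by
  have htop : quillenIdeal E hE = ⊤ := by
    by_contra hne
    obtain ⟨𝔪, h𝔪, hle⟩ := Ideal.exists_le_maximal _ hne
    obtain ⟨c, hc, hEc⟩ := exists_idemEquiv_map_shift 𝔪.primeCompl hE (h 𝔪)
    exact hc (hle hEc)
  have hone : IdemEquiv (E.map C) (E.map (shift 1)) := (Ideal.eq_top_iff_one _).1 htop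
  have hX := hone.map_eval₂RingHom C X (-X)
  rwa [show eval₂RingHom C X = RingHom.id A[X] by ext <;> simp,
    show eval₂RingHom C (X + C 1 * -X) = C.comp (evalRingHom (0 : A)) by ext <;> simp,
    RingHom.coe_id, Matrix.map_id] at hX

theorem isExtended_of_isFreeUpTo_monic {E : Matrix m m A[X]} (hE : IsIdempotentElem E)
    {f : A[X]} (hf : f.Monic) (hfE : IsFreeUpTo f E) : IsExtended E := by
  refine isExtended_of_forall_isMaximal hE fun 𝔪 _ => ?_
  set φ := algebraMap A (Localization.AtPrime 𝔪)
  have hEφ : IsIdempotentElem (E.map (mapRingHom φ)) := isIdempotentElem_map hE _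
  exact (isFreeIdem_of_isFreeUpTo_monic_of_isLocalRing hEφ (hf.map φ)
    (hfE.map (mapRingHom φ))).isExtended hEφ

lemma IsProjectiveFree.polynomial (hA : IsProjectiveFree A)
    (h : ∀ (N : ℕ) (E : Matrix (Fin N) (Fin N) A[X]), IsIdempotentElem E →
      ∃ f : A[X], f.Monic ∧ IsFreeUpTo f E) : IsProjectiveFree A[X] := by
  intro N E hE
  obtain ⟨f, hf, hfE⟩ := h N E hE
  refine .of_idemEquiv hE (isExtended_of_isFreeUpTo_monic hE hf hfE) ?_
  have hfree := (hA N _ (isIdempotentElem_map hE (evalRingHom 0))).map C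
  rwa [Matrix.map_map, ← RingHom.coe_comp] at hfree

end Quillen

section MonicLocalization

/-- The multiplicative set of monic polynomials. The localization of `S[X]` at it is the ring
usually written `S(X)`. -/
def monics (S : Type*) [CommRing S] : Submonoid S[X] where
  carrier := {p | p.Monic}
  one_mem' := monic_one
  mul_mem' := Monic.mul

variable {S : Type*} [CommRing S]

lemma exists_monic_mem_of_notMem_map_C {𝔪 : Ideal S} [𝔪.IsMaximal] {I : Ideal S[X]}
    (h𝔪 : 𝔪.map C ≤ I) {g : S[X]} (hgI : g ∈ I) (hg : g ∉ 𝔪.map C) : ∃ f ∈ I, f.Monic := by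
  let := Ideal.Quotient.field 𝔪
  have hker (p : S[X]) : p.map (Ideal.Quotient.mk 𝔪) = 0 ↔ p ∈ 𝔪.map C := by
    simp [Polynomial.ext_iff, Ideal.mem_map_C_iff, Ideal.Quotient.eq_zero_iff_mem]
  obtain ⟨b, hb⟩ :=
    Ideal.Quotient.mk_surjective (g.map (Ideal.Quotient.mk 𝔪)).leadingCoeff⁻¹
  have hmonic : ((g * C b).map (Ideal.Quotient.mk 𝔪)).Monic := by
    rw [Polynomial.map_mul, map_C, hb]
    exact monic_mul_leadingCoeff_inv (mt (hker g).1 hg)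
  obtain ⟨f, hf, -, hfm⟩ := lifts_and_degree_eq_and_monic ((mem_lifts _).2 ⟨_, rfl⟩) hmonic
  have hsub : f - g * C b ∈ 𝔪.map C := by rw [← hker, Polynomial.map_sub, hf, sub_self]
  exact ⟨f, (I.sub_mem_iff_left (I.mul_mem_right (C b) hgI)).1 (h𝔪 hsub), hfm⟩

lemma map_C_comap_C_eq_of_disjoint_monics {I : Ideal S[X]} [(I.comap C).IsMaximal]
    (hI : Disjoint (monics S : Set S[X]) I) : (I.comap C).map C = I := by
  refine Ideal.map_comap_le.antisymm fun g hgI => ?_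
  by_contra hg
  obtain ⟨f, hfI, hf⟩ := exists_monic_mem_of_notMem_map_C Ideal.map_comap_le hgI hg
  exact Set.disjoint_left.1 hI hf hfI

variable [IsDomain S]

/- Such a prime comes from `K[X]`, where `K` is the field of fractions of `S`, and there a nonzero
prime ideal is generated by each of its prime elements. -/
lemma isPrincipal_of_comap_C_eq_bot [UniqueFactorizationMonoid S] {𝔮 : Ideal S[X]}
    [h𝔮 : 𝔮.IsPrime] (hbot : 𝔮.comap C = ⊥) : 𝔮.IsPrincipal := by
  by_cases h0 : 𝔮 = ⊥
  · exact h0 ▸ bot_isPrincipal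
  obtain ⟨π, hπ𝔮, hπ⟩ := h𝔮.exists_mem_prime_of_ne_bot h0
  let K := FractionRing S
  let M := (nonZeroDivisors S).map (C : S →+* S[X])
  let := Polynomial.algebra (R := S) (A := K)
  have hloc : IsLocalization M K[X] := Polynomial.isLocalization (nonZeroDivisors S) K
  have hdisj : Disjoint (M : Set S[X]) 𝔮 := by
    rw [Set.disjoint_left]
    rintro _ ⟨s, hs, rfl⟩ hs𝔮
    have hsbot : s ∈ 𝔮.comap C := hs𝔮
    exact nonZeroDivisors.ne_zero hs (by rwa [hbot] at hsbot)
  have hle : Ideal.span {π} ≤ 𝔮 := (Ideal.span_singleton_le_iff_mem 𝔮).2 hπ𝔮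
  have hdisjπ : Disjoint (M : Set S[X]) (Ideal.span {π} : Ideal S[X]) := hdisj.mono_right hle
  have hprime : (Ideal.span {π}).IsPrime := Ideal.isPrime_span_singleton_of_prime hπ
  have hprimeK := IsLocalization.isPrime_of_isPrime_disjoint M K[X] _ hprime hdisjπ
  have hinj : Function.Injective (algebraMap S[X] K[X]) :=
    map_injective _ (IsFractionRing.injective S K)
  have hne : (Ideal.span {π}).map (algebraMap S[X] K[X]) ≠ ⊥ := by
    rw [Ne, Ideal.map_eq_bot_iff_of_injective hinj, Ideal.span_singleton_eq_bot]
    exact hπ.ne_zero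
  have heq := (IsPrime.to_maximal_ideal hne).eq_of_le
    (IsLocalization.isPrime_of_isPrime_disjoint M K[X] 𝔮 h𝔮 hdisj).ne_top (Ideal.map_mono hle)
  refine ⟨π, ?_⟩
  rw [← IsLocalization.under_map_of_isPrime_disjoint M K[X] h𝔮 hdisj, ← heq,
    IsLocalization.under_map_of_isPrime_disjoint M K[X] hprime hdisjπ]

variable [IsPrincipalIdealRing S]

lemma isPrincipal_of_disjoint_monics {𝔮 : Ideal S[X]} [𝔮.IsPrime]
    (h𝔮 : Disjoint (monics S : Set S[X]) 𝔮) : 𝔮.IsPrincipal := by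
  by_cases hbot : 𝔮.comap C = ⊥
  · exact isPrincipal_of_comap_C_eq_bot hbot
  · have := IsPrime.to_maximal_ideal hbot
    rw [← map_C_comap_C_eq_of_disjoint_monics h𝔮]
    exact (IsPrincipalIdealRing.principal (𝔮.comap C)).map_ringHom C

instance : IsDomain (Localization (monics S)) :=
  IsLocalization.isDomain_localization fun _ hp => mem_nonZeroDivisors_of_ne_zero (Monic.ne_zero hp)

instance : IsPrincipalIdealRing (Localization (monics S)) := by
  refine .of_prime fun 𝔔 h𝔔 => ?_
  obtain ⟨hprime, hdisj⟩ := (IsLocalization.isPrime_iff_isPrime_disjoint (monics S) _ 𝔔).1 h𝔔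
  rw [← IsLocalization.map_under (monics S) _ 𝔔]
  exact (isPrincipal_of_disjoint_monics hdisj).map_ringHom _

end MonicLocalization

section MvPolynomial

variable {S σ : Type*} [CommRing S]

/-- The isomorphism which exchanges the variable `X` with the variables indexed by `σ`. -/
noncomputable def swapEquiv (S σ : Type*) [CommRing S] :
    MvPolynomial σ S[X] ≃+* (MvPolynomial σ S)[X] :=
  ((MvPolynomial.optionEquivRight S σ).symm.trans (MvPolynomial.optionEquivLeft S σ)).toRingEquiv

lemma swapEquiv_C (f : S[X]) : swapEquiv S σ (MvPolynomial.C f) = f.map MvPolynomial.C := by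
  suffices h : (swapEquiv S σ : MvPolynomial σ S[X] →+* (MvPolynomial σ S)[X]).comp
      MvPolynomial.C = mapRingHom MvPolynomial.C from RingHom.congr_fun h f
  ext1
  · ext1 a
    change MvPolynomial.optionEquivLeft S σ
      ((MvPolynomial.optionEquivRight S σ).symm (MvPolynomial.C (C a))) = _
    rw [← MvPolynomial.optionEquivRight_C, AlgEquiv.symm_apply_apply]
    simp
  · change MvPolynomial.optionEquivLeft S σ
      ((MvPolynomial.optionEquivRight S σ).symm (MvPolynomial.C X)) = _
    rw [← MvPolynomial.optionEquivRight_X_none, AlgEquiv.symm_apply_apply]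
    simp

lemma exists_monic_isFreeUpTo {m : Type*} [Fintype m] {E : Matrix m m (MvPolynomial σ S)[X]}
    (h : ∀ E' : Matrix m m (MvPolynomial σ (Localization (monics S))),
      IsIdempotentElem E' → IsFreeIdem E') (hE : IsIdempotentElem E) :
    ∃ f : (MvPolynomial σ S)[X], f.Monic ∧ IsFreeUpTo f E := by
  let := MvPolynomial.algebraMvPolynomial (σ := σ) (R := S[X]) (S := Localization (monics S))
  let κ := swapEquiv S σ
  have hE' : IsIdempotentElem (E.map κ.symm.toRingHom) := isIdempotentElem_map hE _
  obtain ⟨_, ⟨f, hf, rfl⟩, hfE⟩ :=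
    exists_isFreeUpTo_of_isFreeIdem_map (T := MvPolynomial σ (Localization (monics S)))
      ((monics S).map MvPolynomial.C) (h _ (isIdempotentElem_map hE' (algebraMap _ _)))
  have hκE : (E.map κ.symm.toRingHom).map κ.toRingHom = E := by
    ext1
    simp [κ]
  refine ⟨f.map MvPolynomial.C, Monic.map _ hf, ?_⟩
  rw [← swapEquiv_C, ← hκE]
  exact hfE.map κ.toRingHom

lemma isProjectiveFree_polynomial_mvPolynomial (hS : IsProjectiveFree (MvPolynomial σ S))
    (hSX : IsProjectiveFree (MvPolynomial σ (Localization (monics S)))) :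
    IsProjectiveFree (MvPolynomial σ S)[X] :=
  hS.polynomial fun N _ => exists_monic_isFreeUpTo (hSX N)

theorem isProjectiveFree_mvPolynomial_of_finite (σ : Type*) [Finite σ] :
    ∀ (S : Type u) [CommRing S] [IsDomain S] [IsPrincipalIdealRing S],
      IsProjectiveFree (MvPolynomial σ S) := by
  induction σ using Finite.induction_empty_option with
  | of_equiv e ih =>
    exact fun S _ _ _ => (ih S).of_ringEquiv (MvPolynomial.renameEquiv S e).toRingEquiv
  | h_empty =>
    exact fun S _ _ _ => isProjectiveFree_of_isPrincipalIdealRing.of_ringEquiv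
      (MvPolynomial.isEmptyRingEquiv S _).symm
  | h_option ih =>
    exact fun S _ _ _ => (isProjectiveFree_polynomial_mvPolynomial (ih S) (ih _)).of_ringEquiv
      (MvPolynomial.optionEquivLeft S _).symm.toRingEquiv

lemma exists_finset_map_rename_eq {m n : Type*} [Finite m] [Finite n]
    (E : Matrix m n (MvPolynomial σ S)) :
    ∃ (s : Finset σ) (E' : Matrix m n (MvPolynomial s S)),
      E'.map (MvPolynomial.rename (↑)) = E := by
  classical
  have := Fintype.ofFinite (m × n)
  let vars (k : m × n) := (E k.1 k.2).vars
  have hex (i j) : ∃ p : MvPolynomial (Finset.univ.biUnion vars) S,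
      MvPolynomial.rename (↑) p = E i j :=
    MvPolynomial.exists_rename_eq_of_vars_subset_range _ _ Subtype.val_injective <| by
      rw [Subtype.range_coe]
      exact Finset.coe_subset.2 (Finset.subset_biUnion_of_mem vars (Finset.mem_univ (i, j)))
  choose E' hE' using hex
  exact ⟨_, .of E', Matrix.ext hE'⟩

theorem isProjectiveFree_mvPolynomial [IsDomain S] [IsPrincipalIdealRing S] :
    IsProjectiveFree (MvPolynomial σ S) := by
  intro N E hE
  obtain ⟨s, E', rfl⟩ := exists_finset_map_rename_eq E
  let ι : MvPolynomial s S →+* MvPolynomial σ S := (MvPolynomial.rename (↑)).toRingHom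
  have hE' : IsIdempotentElem E' :=
    Matrix.map_injective (MvPolynomial.rename_injective _ Subtype.val_injective)
      ((Matrix.map_mul (f := ι)).trans hE.eq)
  exact (isProjectiveFree_mvPolynomial_of_finite s S N E' hE').map ι

end MvPolynomial

end QuillenSuslin

theorem stmt_9_general (S : Type*) [CommRing S] [IsDomain S] [IsPrincipalIdealRing S] (σ : Type*)
    (M : Type*) [AddCommGroup M] [Module (MvPolynomial σ S) M] [Module.Finite (MvPolynomial σ S) M]
    [Module.Projective (MvPolynomial σ S) M] : Module.Free (MvPolynomial σ S) M :=
  QuillenSuslin.isProjectiveFree_mvPolynomial.free M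

/-- Quillen–Suslin over a PID: every finitely generated projective module over a
polynomial ring `S[x₁, …, xₙ]` with `S` a principal ideal domain is free. -/
theorem stmt_9 (S : Type*) [CommRing S] [IsDomain S] [IsPrincipalIdealRing S] (n : ℕ)
    (M : Type*) [AddCommGroup M] [Module (MvPolynomial (Fin n) S) M]
    [Module.Finite (MvPolynomial (Fin n) S) M]
    [Module.Projective (MvPolynomial (Fin n) S) M] :
    Module.Free (MvPolynomial (Fin n) S) M :=
  stmt_9_general S (Fin n) M
end

section
/- Let E, F, G be abelian (or exact) categories and let T: E × F → G be a biexact functor (exact in each variable). Given short exact sequences d: 0 → X → Y → Z → 0 in E and e: 0 → X' → Y' → Z' → 0 in F, the two 2-fold Yoneda extension classes of T(Z, Z') by T(X, X') obtained by splicing — namely [T(X,X') → T(Y,X') → T(Z,Y') → T(Z,Z')] (splicing T(d, X') with T(Z, e)) and [T(X,X') → T(X,Y') → T(Y,Z') → T(Z,Z')] (splicing T(X, e) with T(d, Z')) — are negatives of each other in Ext²(T(Z,Z'), T(X,X')). -/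
open CategoryTheory Limits Abelian

/-!
Applying `T` to the two sequences gives a `3 × 3` diagram `A i j` with exact rows and columns. Let
`W` be the pushout of `A 2 1 ← A 1 1 → A 1 2`. There are short exact sequences

  `0 → A 1 1 → W → A 3 1 ⊞ A 1 3 → 0` and `0 → W → A 2 2 → A 3 3 → 0`,

whose classes we call `θ` and `κ`. Restricting `θ` along the two summands gives the classes of the
first column and of the first row, while pushing `κ` out along the two components `p`, `q` of
`W → A 3 1 ⊞ A 1 3` gives the classes of the last row and of the last column. The sum of the two
spliced classes is therefore `κ`, followed by `(p, q)`, followed by `θ`, and `θ` vanishes after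
precomposition with `(p, q)`.
-/

lemma epi_biprod_lift_of_epi_comp {C : Type*} [Category C] [Preadditive C] {B W C₁ C₂ : C}
    [HasBinaryBiproduct C₁ C₂] {p : W ⟶ C₁} {q : W ⟶ C₂} [Epi p] {y : B ⟶ W}
    (hyp : y ≫ p = 0) [Epi (y ≫ q)] : Epi (biprod.lift p q) := by
  refine Preadditive.epi_of_cancel_zero _ fun k hk ↦ ?_
  have hk' : p ≫ biprod.inl ≫ k + q ≫ biprod.inr ≫ k = 0 := by
    rw [← hk, biprod.lift_eq, Preadditive.add_comp, Category.assoc, Category.assoc]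
  have hr : biprod.inr ≫ k = 0 := by
    rw [← cancel_epi (y ≫ q), comp_zero]
    simpa [reassoc_of% hyp] using y ≫= hk'
  have hl : biprod.inl ≫ k = 0 := by
    rw [← cancel_epi p, comp_zero]
    simpa [hr] using hk'
  ext
  · rw [hl, comp_zero]
  · rw [hr, comp_zero]

lemma mk₀_biprod_lift_comp {C : Type*} [Category C] [Abelian C] [HasExt.{w} C] {W X₁ X₂ Y : C}
    {n : ℕ} (p : W ⟶ X₁) (q : W ⟶ X₂) (α : Ext (X₁ ⊞ X₂) Y n) :
    (Ext.mk₀ (biprod.lift p q)).comp α (zero_add n) =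
      (Ext.mk₀ p).comp ((Ext.mk₀ biprod.inl).comp α (zero_add n)) (zero_add n) +
        (Ext.mk₀ q).comp ((Ext.mk₀ biprod.inr).comp α (zero_add n)) (zero_add n) := by
  rw [biprod.lift_eq, Ext.mk₀_add, Ext.add_comp, Ext.mk₀_comp_mk₀_assoc, Ext.mk₀_comp_mk₀_assoc]

section Pushout

variable {C : Type*} [Category C] [HasZeroMorphisms C] {A B₁ C₁ B₂ C₂ : C}
  {f₁ : A ⟶ B₁} {g₁ : B₁ ⟶ C₁} {f₂ : A ⟶ B₂} {g₂ : B₂ ⟶ C₂}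

/-- The projection to `C₁` of the pushout of `A ⟶ B₁` and `A ⟶ B₂`, where `A ⟶ B₁ ⟶ C₁` is a
complex: it kills `B₂`. -/
noncomputable def pushoutToLeft (w₁ : f₁ ≫ g₁ = 0) (f₂ : A ⟶ B₂) [HasPushout f₁ f₂] :
    pushout f₁ f₂ ⟶ C₁ :=
  pushout.desc g₁ 0 (by rw [w₁, comp_zero])

/-- The projection to `C₂` of the pushout of `A ⟶ B₁` and `A ⟶ B₂`, where `A ⟶ B₂ ⟶ C₂` is a
complex: it kills `B₁`. -/
noncomputable def pushoutToRight (f₁ : A ⟶ B₁) (w₂ : f₂ ≫ g₂ = 0) [HasPushout f₁ f₂] :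
    pushout f₁ f₂ ⟶ C₂ :=
  pushout.desc 0 g₂ (by rw [w₂, comp_zero])

@[simp]
lemma inl_pushoutToLeft [HasPushout f₁ f₂] (w₁ : f₁ ≫ g₁ = 0) :
    pushout.inl f₁ f₂ ≫ pushoutToLeft w₁ f₂ = g₁ :=
  pushout.inl_desc _ _ _

@[simp]
lemma inr_pushoutToLeft [HasPushout f₁ f₂] (w₁ : f₁ ≫ g₁ = 0) :
    pushout.inr f₁ f₂ ≫ pushoutToLeft w₁ f₂ = 0 :=
  pushout.inr_desc _ _ _

@[simp]
lemma inl_pushoutToRight [HasPushout f₁ f₂] (w₂ : f₂ ≫ g₂ = 0) :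
    pushout.inl f₁ f₂ ≫ pushoutToRight f₁ w₂ = 0 :=
  pushout.inl_desc _ _ _

@[simp]
lemma inr_pushoutToRight [HasPushout f₁ f₂] (w₂ : f₂ ≫ g₂ = 0) :
    pushout.inr f₁ f₂ ≫ pushoutToRight f₁ w₂ = g₂ :=
  pushout.inr_desc _ _ _

/-- The sequence `A ⟶ W ⟶ C₁ ⊞ C₂`, where `W` is the pushout of two extensions `B₁` and `B₂` of
`C₁` and `C₂` by the same object `A`. -/
noncomputable abbrev pushoutSequence [HasPushout f₁ f₂] [HasBinaryBiproduct C₁ C₂]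
    (w₁ : f₁ ≫ g₁ = 0) (w₂ : f₂ ≫ g₂ = 0) : ShortComplex C :=
  .mk (f₂ ≫ pushout.inr f₁ f₂) (biprod.lift (pushoutToLeft w₁ f₂) (pushoutToRight f₁ w₂))
    (by ext <;> simp [w₂])

end Pushout

section PushoutOfExtensions

variable {C : Type*} [Category C] [Abelian C] {A B₁ C₁ B₂ C₂ : C}
  {f₁ : A ⟶ B₁} {g₁ : B₁ ⟶ C₁} {f₂ : A ⟶ B₂} {g₂ : B₂ ⟶ C₂}
  {w₁ : f₁ ≫ g₁ = 0} {w₂ : f₂ ≫ g₂ = 0}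

lemma shortExact_inr_pushoutToLeft (h₁ : (ShortComplex.mk f₁ g₁ w₁).ShortExact)
    (f₂ : A ⟶ B₂) :
    (ShortComplex.mk (pushout.inr f₁ f₂) (pushoutToLeft w₁ f₂)
      (inr_pushoutToLeft w₁)).ShortExact := by
  have : Mono f₁ := h₁.mono_f
  have : Epi g₁ := h₁.epi_g
  have : Epi (pushoutToLeft w₁ f₂) := epi_of_epi_fac (inl_pushoutToLeft w₁)
  refine .mk' (ShortComplex.exact_of_g_is_cokernel _ (CokernelCofork.IsColimit.ofπ' _ _
    fun k hk ↦ ?_)) inferInstance inferInstance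
  have hk' : f₁ ≫ pushout.inl f₁ f₂ ≫ k = 0 := by
    rw [pushout.condition_assoc, hk, comp_zero]
  refine ⟨h₁.exact.desc (pushout.inl f₁ f₂ ≫ k) hk', ?_⟩
  apply pushout.hom_ext
  · rw [reassoc_of% inl_pushoutToLeft w₁]
    exact h₁.exact.g_desc _ hk'
  · rw [reassoc_of% inr_pushoutToLeft w₁, zero_comp, hk]

lemma pushoutSequence_shortExact
    (h₁ : (ShortComplex.mk f₁ g₁ w₁).ShortExact) (h₂ : (ShortComplex.mk f₂ g₂ w₂).ShortExact) :
    (pushoutSequence w₁ w₂).ShortExact := by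
  have hW := shortExact_inr_pushoutToLeft h₁ f₂
  have : Mono f₂ := h₂.mono_f
  have : Epi g₂ := h₂.epi_g
  have : Mono (pushout.inr f₁ f₂) := hW.mono_f
  have : Epi (pushoutToLeft w₁ f₂) := hW.epi_g
  have : Mono (pushoutSequence w₁ w₂).f := mono_comp f₂ (pushout.inr f₁ f₂)
  have : Epi (pushout.inr f₁ f₂ ≫ pushoutToRight f₁ w₂) := by rwa [inr_pushoutToRight]
  refine .mk' (ShortComplex.exact_of_f_is_kernel _ (KernelFork.IsLimit.ofι' _ _
    fun k hk ↦ ?_)) inferInstance (epi_biprod_lift_of_epi_comp (inr_pushoutToLeft w₁))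
  have hkp : k ≫ pushoutToLeft w₁ f₂ = 0 := by simpa using hk =≫ biprod.fst
  have hkq : k ≫ pushoutToRight f₁ w₂ = 0 := by simpa using hk =≫ biprod.snd
  let m := hW.exact.lift k hkp
  have hm : m ≫ pushout.inr f₁ f₂ = k := hW.exact.lift_f k hkp
  have hmg : m ≫ g₂ = 0 := by
    rw [← inr_pushoutToRight (f₁ := f₁) w₂, reassoc_of% hm, hkq]
  refine ⟨h₂.exact.lift m hmg, ?_⟩
  rw [← Category.assoc]
  exact (h₂.exact.lift_f m hmg =≫ _).trans hm

lemma pushoutToLeft_comp_extClass_add_pushoutToRight_comp_extClass_eq_zero [HasExt.{w} C]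
    (h₁ : (ShortComplex.mk f₁ g₁ w₁).ShortExact) (h₂ : (ShortComplex.mk f₂ g₂ w₂).ShortExact) :
    (Ext.mk₀ (pushoutToLeft w₁ f₂)).comp h₁.extClass (zero_add 1) +
      (Ext.mk₀ (pushoutToRight f₁ w₂)).comp h₂.extClass (zero_add 1) = 0 := by
  have hθ := pushoutSequence_shortExact h₁ h₂
  have inl_θ : h₁.extClass = (Ext.mk₀ biprod.inl).comp hθ.extClass (zero_add 1) := by
    simpa using ShortComplex.ShortExact.extClass_naturality h₁ hθ
      { τ₁ := 𝟙 A
        τ₂ := pushout.inl f₁ f₂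
        τ₃ := biprod.inl
        comm₁₂ := by simp [pushout.condition]
        comm₂₃ := by ext <;> simp }
  have inr_θ : h₂.extClass = (Ext.mk₀ biprod.inr).comp hθ.extClass (zero_add 1) := by
    simpa using ShortComplex.ShortExact.extClass_naturality h₂ hθ
      { τ₁ := 𝟙 A
        τ₂ := pushout.inr f₁ f₂
        τ₃ := biprod.inr
        comm₂₃ := by ext <;> simp }
  rw [inl_θ, inr_θ]
  exact (mk₀_biprod_lift_comp _ _ _).symm.trans hθ.comp_extClass

end PushoutOfExtensions

/-- A `3 × 3` diagram all of whose rows and columns are complexes, encoded as a complex of short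
complexes `K.X₁ ⟶ K.X₂ ⟶ K.X₃`, which are its rows. -/
abbrev ThreeByThree (C : Type*) [Category C] [HasZeroMorphisms C] := ShortComplex (ShortComplex C)

namespace ThreeByThree

section ZeroMorphisms

variable {C : Type*} [Category C] [HasZeroMorphisms C] (K : ThreeByThree C)

/-- The first column of a `3 × 3` diagram. It is `K.map ShortComplex.π₁`, with its objects and maps
visible at reducible transparency; likewise for the other columns. -/
abbrev column₁ : ShortComplex C := .mk K.f.τ₁ K.g.τ₁ (K.map ShortComplex.π₁).zero

/-- The second column of a `3 × 3` diagram. -/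
abbrev column₂ : ShortComplex C := .mk K.f.τ₂ K.g.τ₂ (K.map ShortComplex.π₂).zero

/-- The third column of a `3 × 3` diagram. -/
abbrev column₃ : ShortComplex C := .mk K.f.τ₃ K.g.τ₃ (K.map ShortComplex.π₃).zero

variable [HasPushout K.f.τ₁ K.X₁.f]

/-- The map to the central object of a `3 × 3` diagram from the pushout of the two maps leaving the
top left corner. -/
noncomputable def pushoutToCenter : pushout K.f.τ₁ K.X₁.f ⟶ K.X₂.X₂ :=
  pushout.desc K.X₂.f K.f.τ₂ K.f.comm₁₂

@[simp]
lemma inl_pushoutToCenter : pushout.inl _ _ ≫ K.pushoutToCenter = K.X₂.f :=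
  pushout.inl_desc _ _ _

@[simp]
lemma inr_pushoutToCenter : pushout.inr _ _ ≫ K.pushoutToCenter = K.f.τ₂ :=
  pushout.inr_desc _ _ _

lemma pushoutToCenter_comp_column₂_g :
    K.pushoutToCenter ≫ K.column₂.g = pushoutToLeft K.column₁.zero K.X₁.f ≫ K.X₃.f := by
  apply pushout.hom_ext
  · rw [reassoc_of% inl_pushoutToCenter, reassoc_of% inl_pushoutToLeft K.column₁.zero, K.g.comm₁₂]
  · rw [reassoc_of% inr_pushoutToCenter, reassoc_of% inr_pushoutToLeft K.column₁.zero, zero_comp,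
      K.column₂.zero]

lemma pushoutToCenter_comp_X₂_g :
    K.pushoutToCenter ≫ K.X₂.g = pushoutToRight K.f.τ₁ K.X₁.zero ≫ K.column₃.f := by
  apply pushout.hom_ext
  · rw [reassoc_of% inl_pushoutToCenter, reassoc_of% inl_pushoutToRight K.X₁.zero, zero_comp,
      K.X₂.zero]
  · rw [reassoc_of% inr_pushoutToCenter, reassoc_of% inr_pushoutToRight K.X₁.zero, K.f.comm₂₃]

/-- For a `3 × 3` diagram, the sequence from the pushout of the two maps leaving the top left
corner, through the central object, to the bottom right corner. -/
noncomputable abbrev centerSequence : ShortComplex C :=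
  .mk K.pushoutToCenter (K.g.τ₂ ≫ K.X₃.g) (by
    rw [reassoc_of% pushoutToCenter_comp_column₂_g, K.X₃.zero, comp_zero])

end ZeroMorphisms

section Abelian

variable {C : Type*} [Category C] [Abelian C] {K : ThreeByThree C}

lemma mono_pushoutToCenter (hc₁ : K.column₁.ShortExact) (hc₂ : K.column₂.ShortExact)
    [Mono K.X₃.f] : Mono K.pushoutToCenter := by
  have hW := shortExact_inr_pushoutToLeft hc₁ K.X₁.f
  let φ : ShortComplex.mk _ _ (inr_pushoutToLeft (f₂ := K.X₁.f) K.column₁.zero) ⟶ K.column₂ :=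
    { τ₁ := 𝟙 K.X₁.X₂
      τ₂ := K.pushoutToCenter
      τ₃ := K.X₃.f
      comm₂₃ := K.pushoutToCenter_comp_column₂_g }
  have := hW.mono_f
  have := hc₂.mono_f
  have : Mono φ.τ₁ := inferInstanceAs (Mono (𝟙 K.X₁.X₂))
  have : Mono φ.τ₃ := inferInstanceAs (Mono K.X₃.f)
  exact ShortComplex.mono_τ₂_of_exact_of_mono φ hW.exact

lemma centerSequence_shortExact (hc₁ : K.column₁.ShortExact) (hc₂ : K.column₂.ShortExact)
    (hr₃ : K.X₃.ShortExact) : K.centerSequence.ShortExact := by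
  have : Mono K.X₃.f := hr₃.mono_f
  have : Epi K.X₃.g := hr₃.epi_g
  have : Epi K.g.τ₁ := hc₁.epi_g
  have : Epi K.g.τ₂ := hc₂.epi_g
  refine .mk' (ShortComplex.exact_of_g_is_cokernel _ (CokernelCofork.IsColimit.ofπ' _ _
    fun k hk ↦ ?_)) (mono_pushoutToCenter hc₁ hc₂) (epi_comp _ _)
  have hk_inl : K.X₂.f ≫ k = 0 := by rw [← inl_pushoutToCenter, Category.assoc, hk, comp_zero]
  have hk_inr : K.f.τ₂ ≫ k = 0 := by rw [← inr_pushoutToCenter, Category.assoc, hk, comp_zero]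
  let l := hc₂.exact.desc k hk_inr
  have hl : K.g.τ₂ ≫ l = k := hc₂.exact.g_desc k hk_inr
  have hl_zero : K.X₃.f ≫ l = 0 := by
    rw [← cancel_epi K.g.τ₁, K.g.comm₁₂_assoc, hl, hk_inl, comp_zero]
  exact ⟨hr₃.exact.desc l hl_zero, by rw [Category.assoc, hr₃.exact.g_desc, hl]⟩

variable [HasExt.{w} C]

lemma centerSequence_extClass_comp_pushoutToLeft (hκ : K.centerSequence.ShortExact)
    (hr₃ : K.X₃.ShortExact) :
    hκ.extClass.comp (Ext.mk₀ (pushoutToLeft K.column₁.zero K.X₁.f)) (add_zero 1) =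
      hr₃.extClass := by
  simpa using ShortComplex.ShortExact.extClass_naturality hκ hr₃
    { τ₁ := pushoutToLeft K.column₁.zero K.X₁.f
      τ₂ := K.column₂.g
      τ₃ := 𝟙 K.X₃.X₃
      comm₁₂ := K.pushoutToCenter_comp_column₂_g.symm }

lemma centerSequence_extClass_comp_pushoutToRight (hκ : K.centerSequence.ShortExact)
    (hc₃ : K.column₃.ShortExact) :
    hκ.extClass.comp (Ext.mk₀ (pushoutToRight K.f.τ₁ K.X₁.zero)) (add_zero 1) =
      hc₃.extClass := by
  simpa using ShortComplex.ShortExact.extClass_naturality hκ hc₃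
    { τ₁ := pushoutToRight K.f.τ₁ K.X₁.zero
      τ₂ := K.X₂.g
      τ₃ := 𝟙 K.X₃.X₃
      comm₁₂ := K.pushoutToCenter_comp_X₂_g.symm
      comm₂₃ := by simp [K.g.comm₂₃] }

theorem extClass_row₃_comp_column₁_eq_neg (hr₁ : K.X₁.ShortExact) (hr₃ : K.X₃.ShortExact)
    (hc₁ : K.column₁.ShortExact) (hc₂ : K.column₂.ShortExact) (hc₃ : K.column₃.ShortExact) :
    hr₃.extClass.comp hc₁.extClass rfl = -(hc₃.extClass.comp hr₁.extClass rfl) := by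
  have hκ := centerSequence_shortExact hc₁ hc₂ hr₃
  rw [eq_neg_iff_add_eq_zero, ← centerSequence_extClass_comp_pushoutToLeft hκ hr₃,
    ← centerSequence_extClass_comp_pushoutToRight hκ hc₃, Ext.comp_assoc_of_second_deg_zero,
    Ext.comp_assoc_of_second_deg_zero, ← Ext.comp_add,
    pushoutToLeft_comp_extClass_add_pushoutToRight_comp_extClass_eq_zero hc₁ hr₁, Ext.comp_zero]

end Abelian

section Bifunctor

variable {E F G : Type*} [Category E] [Category F] [Category G] [HasZeroMorphisms E]
  [HasZeroMorphisms F] [HasZeroMorphisms G]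

/-- The `3 × 3` diagram obtained by applying `T` to the objects and maps of `S` and `S'`: its rows
are the `T(S.Xᵢ, S')` and its columns are the `T(S, S'.Xⱼ)`. -/
abbrev ofBifunctor (T : E ⥤ F ⥤ G) [∀ X, (T.obj X).PreservesZeroMorphisms]
    [∀ Y, (T.flip.obj Y).PreservesZeroMorphisms] (S : ShortComplex E) (S' : ShortComplex F) :
    ThreeByThree G where
  X₁ := S'.map (T.obj S.X₁)
  X₂ := S'.map (T.obj S.X₂)
  X₃ := S'.map (T.obj S.X₃)
  f := S'.mapNatTrans (T.map S.f)
  g := S'.mapNatTrans (T.map S.g)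
  zero := by
    ext
    · exact (S.map (T.flip.obj S'.X₁)).zero
    · exact (S.map (T.flip.obj S'.X₂)).zero
    · exact (S.map (T.flip.obj S'.X₃)).zero

end Bifunctor

end ThreeByThree

theorem stmt_18_general {E F G : Type*} [Category E] [Category F] [Category G]
    [HasZeroMorphisms E] [HasZeroMorphisms F] [Abelian G] [HasExt.{w} G]
    (T : E ⥤ F ⥤ G) [∀ X, (T.obj X).PreservesZeroMorphisms]
    [∀ Y, (T.flip.obj Y).PreservesZeroMorphisms] (S : ShortComplex E) (S' : ShortComplex F)
    (h₁ : (S.map (T.flip.obj S'.X₁)).ShortExact) (h₂ : (S'.map (T.obj S.X₃)).ShortExact)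
    (h₃ : (S'.map (T.obj S.X₁)).ShortExact) (h₄ : (S.map (T.flip.obj S'.X₃)).ShortExact)
    (h_mid : (S.map (T.flip.obj S'.X₂)).ShortExact) :
    h₂.extClass.comp h₁.extClass rfl = -(h₄.extClass.comp h₃.extClass rfl) :=
  ThreeByThree.extClass_row₃_comp_column₁_eq_neg (K := .ofBifunctor T S S') h₃ h₂ h₁ h_mid h₄

/-- Let `T : E × F → G` be a biexact functor of abelian categories. Given short exact
sequences `d : 0 → X → Y → Z → 0` in `E` and `e : 0 → X' → Y' → Z' → 0` in `F`, the two
2-fold Yoneda extension classes of `T(Z,Z')` by `T(X,X')` obtained by splicing — namely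
splicing `T(d, X')` with `T(Z, e)`, and splicing `T(X, e)` with `T(d, Z')` — are negatives
of each other in `Ext²(T(Z,Z'), T(X,X'))`. -/
theorem stmt_18 {E F G : Type*} [Category E] [Category F] [Category G]
    [Abelian E] [Abelian F] [Abelian G] [HasExt.{w} G]
    (T : E ⥤ F ⥤ G)
    -- T is biexact
    (hTl : ∀ X : E, Nonempty (PreservesFiniteLimits (T.obj X)) ∧
      Nonempty (PreservesFiniteColimits (T.obj X)))
    (hTr : ∀ Y : F, Nonempty (PreservesFiniteLimits (T.flip.obj Y)) ∧
      Nonempty (PreservesFiniteColimits (T.flip.obj Y)))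
    (S : ShortComplex E) (hS : S.ShortExact)
    (S' : ShortComplex F) (hS' : S'.ShortExact)
    -- the four short exact sequences obtained by applying T in one variable
    (hz₁ : (T.map S.f).app S'.X₁ ≫ (T.map S.g).app S'.X₁ = 0)
    (hz₂ : (T.obj S.X₃).map S'.f ≫ (T.obj S.X₃).map S'.g = 0)
    (hz₃ : (T.obj S.X₁).map S'.f ≫ (T.obj S.X₁).map S'.g = 0)
    (hz₄ : (T.map S.f).app S'.X₃ ≫ (T.map S.g).app S'.X₃ = 0)
    (h₁ : (ShortComplex.mk _ _ hz₁).ShortExact)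
    (h₂ : (ShortComplex.mk _ _ hz₂).ShortExact)
    (h₃ : (ShortComplex.mk _ _ hz₃).ShortExact)
    (h₄ : (ShortComplex.mk _ _ hz₄).ShortExact) :
    h₂.extClass.comp h₁.extClass rfl = - (h₄.extClass.comp h₃.extClass rfl) := by
  have (X : E) : (T.obj X).PreservesZeroMorphisms := by
    obtain ⟨⟨_⟩, -⟩ := hTl X
    infer_instance
  have (Y : F) : (T.flip.obj Y).PreservesZeroMorphisms := by
    obtain ⟨⟨_⟩, -⟩ := hTr Y
    infer_instance
  obtain ⟨⟨_⟩, ⟨_⟩⟩ := hTr S'.X₂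
  exact stmt_18_general T S S' h₁ h₂ h₃ h₄ (hS.map_of_exact (T.flip.obj S'.X₂))
end
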